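/- Let n ≥ 2 be an integer, α ∈ (0,n), β > 0 and A > 0, and assume α < β and β < 1. Then there exists a mass m_* = m_*(n,α,β,A) > 0 such that for every m > m_*, the ball B[m] is not an L¹-local minimizer at mass m of E_{α,β,A}. -/

import Mathlib

open MeasureTheory Metric Filter ENNReal

noncomputable section

/-- The Lebesgue density of `E` at `x` equals `d`. -/
def HasDensity {n : ℕ} (E : Set (EuclideanSpace ℝ (Fin n)))
    (x : EuclideanSpace ℝ (Fin n)) (d : ℝ) : Prop :=
  Filter.Tendsto
    (fun r : ℝ => (volume (E ∩ Metric.ball x r)).toReal / (volume (Metric.ball x r)).toReal)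
    (nhdsWithin 0 (Set.Ioi 0)) (nhds d)

/-- The essential boundary of `E`: points where `E` has neither density 0 nor density 1. -/
def essBoundary {n : ℕ} (E : Set (EuclideanSpace ℝ (Fin n))) :
    Set (EuclideanSpace ℝ (Fin n)) :=
  {x | ¬ HasDensity E x 0 ∧ ¬ HasDensity E x 1}

/-- The perimeter of `E`: the `(n-1)`-dimensional Hausdorff measure of the essential
boundary of `E`. -/
def perimeter {n : ℕ} (E : Set (EuclideanSpace ℝ (Fin n))) : ℝ≥0∞ :=
  μH[(n : ℝ) - 1] (essBoundary E)

/-- The Riesz energy `V_α(E) = ∫_{E×E} |x-y|^(α-n) dx dy`. -/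
def rieszEnergy {n : ℕ} (α : ℝ) (E : Set (EuclideanSpace ℝ (Fin n))) : ℝ≥0∞ :=
  ∫⁻ x in E, ∫⁻ y in E, ENNReal.ofReal (‖x - y‖ ^ (α - (n : ℝ)))

/-- The potential energy `U_{β,A}(E) = A ∫_E |x|^β dx`. -/
def potEnergy {n : ℕ} (β A : ℝ) (E : Set (EuclideanSpace ℝ (Fin n))) : ℝ≥0∞ :=
  ∫⁻ x in E, ENNReal.ofReal (A * ‖x‖ ^ β)

/-- The total energy `E_{α,β,A} = P + V_α + U_{β,A}`. -/
def totalEnergy {n : ℕ} (α β A : ℝ) (E : Set (EuclideanSpace ℝ (Fin n))) : ℝ≥0∞ :=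
  perimeter E + rieszEnergy α E + potEnergy β A E

/-- `E` is a minimizer of `E_{α,β,A}` at mass `m`. -/
def IsMinimizer {n : ℕ} (α β A m : ℝ) (E : Set (EuclideanSpace ℝ (Fin n))) : Prop :=
  MeasurableSet E ∧ volume E = ENNReal.ofReal m ∧
    ∀ F : Set (EuclideanSpace ℝ (Fin n)), MeasurableSet F → volume F = ENNReal.ofReal m →
      totalEnergy α β A E ≤ totalEnergy α β A F

/-- The unit ball of `ℝⁿ` centered at the origin. -/
def unitBall (n : ℕ) : Set (EuclideanSpace ℝ (Fin n)) := Metric.ball 0 1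

/-- `B[m]`: the open ball centered at `0` with volume `m`. -/
def ballOfVolume (n : ℕ) (m : ℝ) : Set (EuclideanSpace ℝ (Fin n)) :=
  Metric.ball 0 ((m / (volume (unitBall n)).toReal) ^ (1 / (n : ℝ)))

/-- `E` is an `L¹`-local minimizer of `E_{α,β,A}` at mass `m`: there is `ε > 0` such that
`E` minimizes the energy among sets of the same mass within symmetric difference `< ε`. -/
def IsL1LocalMin {n : ℕ} (α β A m : ℝ) (E : Set (EuclideanSpace ℝ (Fin n))) : Prop :=
  MeasurableSet E ∧ volume E = ENNReal.ofReal m ∧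
    ∃ ε : ℝ, 0 < ε ∧ ∀ F : Set (EuclideanSpace ℝ (Fin n)), MeasurableSet F →
      volume F = ENNReal.ofReal m → volume (symmDiff E F) < ENNReal.ofReal ε →
        totalEnergy α β A E ≤ totalEnergy α β A F

/-!
A ball of large radius `R` loses energy when its surface is rippled. Replace it by the dilation by
`R` of the star body with radial function `(1 + g) ^ (1 / n)`, where `g` is the restriction to the
unit sphere of `δ * sin (k * ⟪e, x⟫)`. Since `g` is odd, the volume does not change and all
first-order terms cancel: `(1 + t) ^ p + (1 - t) ^ p ≤ 2 * (1 + t ^ 2)` for `0 ≤ p ≤ 2`. So the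
relative increase of the potential energy is at most `δ ^ 2`, and that of the perimeter is
`O(δ ^ 2 + (δ * k) ^ 2)`. The Riesz energy also gains at most the factor `1 + δ ^ 2`, minus a
multiple of the Gagliardo energy of `g`, which comes from the identity
`I(s, s) + I(t, t) = 2 * I(s, t) + I(t \ s, t \ s)` for the interaction `I` of nested sets and is at
least of order `δ ^ 2 * k ^ (1 - α)`.

With `k = R / l` and after division by `δ ^ 2 * R ^ (n + 1)` the energy changes by at most
`C * (R ^ (-2) + l ^ (-2) + R ^ (α - 1) + R ^ (β - 1)) - c * l ^ (α - 1)`. As `α, β < 1`, this is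
negative once `l` and then `R` are large, and `δ → 0` brings the competitor arbitrarily close to
the ball in `L¹`.
-/

section

open Set (Ioi Iio Ioo Ico)
open scoped Pointwise Topology

/-! ### Polar coordinates -/

/-- The measure `r ^ d dr` on the half-line `r > 0`, regarded as a measure on `ℝ` so that
integrands need not be restricted to the subtype of positive reals. -/
def radialMeasure (d : ℕ) : Measure ℝ := (Measure.volumeIoiPow d).map (↑)

instance (d : ℕ) : SFinite (radialMeasure d) := by
  unfold radialMeasure
  infer_instance

theorem lintegral_radialMeasure (d : ℕ) {f : ℝ → ℝ≥0∞} (hf : Measurable f) :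
    ∫⁻ r, f r ∂radialMeasure d = ∫⁻ r in Ioi 0, ENNReal.ofReal (r ^ d) * f r := by
  rw [radialMeasure, lintegral_map hf measurable_subtype_coe, Measure.volumeIoiPow,
    lintegral_withDensity_eq_lintegral_mul _ (by fun_prop) (by fun_prop)]
  exact lintegral_subtype_comap measurableSet_Ioi fun r : ℝ ↦ ENNReal.ofReal (r ^ d) * f r

theorem ae_radialMeasure_pos (d : ℕ) : ∀ᵐ r ∂radialMeasure d, 0 < r := by
  rw [radialMeasure, ae_map_iff (by fun_prop) measurableSet_Ioi]
  exact .of_forall fun r ↦ r.2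

theorem radialMeasure_apply (d : ℕ) {s : Set ℝ} (hs : MeasurableSet s) :
    radialMeasure d s = ∫⁻ r in Ioi 0 ∩ s, ENNReal.ofReal (r ^ d) := by
  rw [← lintegral_indicator_one hs, lintegral_radialMeasure d (measurable_one.indicator hs),
    Set.inter_comm, ← Measure.restrict_restrict hs, ← lintegral_indicator hs]
  exact lintegral_congr fun r ↦ by by_cases h : r ∈ s <;> simp [h]

theorem map_mul_left_radialMeasure (d : ℕ) {c : ℝ} (hc : 0 < c) :
    ENNReal.ofReal (c ^ (d + 1)) • (radialMeasure d).map (c * ·) = radialMeasure d := by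
  refine Measure.ext_of_lintegral _ fun f hf ↦ ?_
  have hpre : (c * ·) ⁻¹' Ioi 0 = Ioi 0 := by simp [hc]
  have hvol : ∫⁻ r in Ioi 0, ENNReal.ofReal (r ^ d) * f r =
      ENNReal.ofReal c * ∫⁻ r in Ioi 0, ENNReal.ofReal ((c * r) ^ d) * f (c * r) := by
    conv_lhs => rw [← Real.smul_map_volume_mul_left hc.ne']
    rw [Measure.restrict_smul, lintegral_smul_measure, setLIntegral_map measurableSet_Ioi
      (by fun_prop) (measurable_const_mul c), hpre, smul_eq_mul, abs_of_pos hc]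
  rw [lintegral_smul_measure, lintegral_map hf (measurable_const_mul c),
    lintegral_radialMeasure d (by fun_prop), lintegral_radialMeasure d hf, hvol,
    smul_eq_mul, pow_succ', ENNReal.ofReal_mul hc.le, mul_assoc,
    ← lintegral_const_mul _ (by fun_prop)]
  simp only [mul_pow, ENNReal.ofReal_mul (pow_nonneg hc.le d), mul_assoc]

theorem setLIntegral_Iio_radialMeasure (d : ℕ) {c : ℝ} (hc : 0 < c) {f : ℝ → ℝ≥0∞}
    (hf : Measurable f) :
    ∫⁻ r in Iio c, f r ∂radialMeasure d =
      ENNReal.ofReal (c ^ (d + 1)) * ∫⁻ r in Iio 1, f (c * r) ∂radialMeasure d := by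
  have hpre : (c * ·) ⁻¹' Iio c = Iio 1 := by
    ext r; simp [mul_lt_iff_lt_one_right hc]
  conv_lhs => rw [← map_mul_left_radialMeasure d hc]
  rw [Measure.restrict_smul, lintegral_smul_measure,
    setLIntegral_map measurableSet_Iio hf (measurable_const_mul c), hpre, smul_eq_mul]

section Polar

variable {E : Type*} [NormedAddCommGroup E] [NormedSpace ℝ E]

theorem abs_sub_one_lt_of_smul_mem_ball {θ φ : sphere (0 : E) 1} {r ε : ℝ} (hr : 0 < r)
    (h : r • (θ : E) ∈ ball (φ : E) ε) : |r - 1| < ε ∧ θ ∈ ball φ (2 * ε) := by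
  rw [mem_ball, dist_eq_norm] at h
  have hr1 : |r - 1| < ε := by
    have := abs_norm_sub_norm_le (r • (θ : E)) (φ : E)
    rw [norm_smul, norm_eq_of_mem_sphere, norm_eq_of_mem_sphere, mul_one,
      Real.norm_of_nonneg hr.le] at this
    linarith
  refine ⟨hr1, ?_⟩
  have hsub : (θ : E) - φ = (r • (θ : E) - φ) + (1 - r) • (θ : E) := by module
  calc dist (θ : E) φ ≤ ‖r • (θ : E) - φ‖ + ‖(1 - r) • (θ : E)‖ := by
        rw [dist_eq_norm, hsub]
        exact norm_add_le _ _
    _ < 2 * ε := by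
        rw [norm_smul, norm_eq_of_mem_sphere, mul_one, Real.norm_eq_abs, abs_sub_comm]
        linarith

variable [FiniteDimensional ℝ E] [MeasurableSpace E] [BorelSpace E]
  (μ : Measure E) [μ.IsAddHaarMeasure]

theorem measurePreserving_neg_sphere :
    MeasurePreserving (fun θ : sphere (0 : E) 1 ↦ -θ) μ.toSphere μ.toSphere := by
  refine ⟨by fun_prop, Measure.ext fun s hs ↦ ?_⟩
  have himage : Ioo (0 : ℝ) 1 • ((↑) '' ((fun θ : sphere (0 : E) 1 ↦ -θ) ⁻¹' s) : Set E) =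
      -(Ioo (0 : ℝ) 1 • ((↑) '' s : Set E)) := by
    rw [← Set.smul_neg]
    congr 1
    ext x
    constructor
    · rintro ⟨θ, hθ, rfl⟩
      exact ⟨-θ, hθ, by simp⟩
    · rintro ⟨θ, hθ, hx⟩
      exact ⟨-θ, by simpa using hθ, by simp [hx]⟩
  rw [Measure.map_apply (by fun_prop) hs, μ.toSphere_apply' hs,
    μ.toSphere_apply' (measurable_neg hs), himage, Measure.measure_neg]

variable [Nontrivial E]

theorem measurePreserving_smul_sphere :
    MeasurePreserving (fun p : sphere (0 : E) 1 × ℝ ↦ p.2 • (p.1 : E))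
      (μ.toSphere.prod (radialMeasure (Module.finrank ℝ E - 1))) μ := by
  let Φ : sphere (0 : E) 1 × Ioi (0 : ℝ) → E := fun p ↦ (p.2 : ℝ) • (p.1 : E)
  have hΦ : MeasurePreserving Φ
      (μ.toSphere.prod (Measure.volumeIoiPow (Module.finrank ℝ E - 1))) μ := by
    have hval : MeasurePreserving ((↑) : ({0}ᶜ : Set E) → E) (μ.comap (↑)) μ := by
      simpa [restrict_compl_singleton] using
        (measurePreserving_subtype_coe (μa := μ) (measurableSet_singleton (0 : E)).compl)
    exact hval.comp (μ.measurePreserving_homeomorphUnitSphereProd.symm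
      (homeomorphUnitSphereProd E).toMeasurableEquiv)
  have hid : MeasurePreserving (Prod.map id (↑))
      (μ.toSphere.prod (Measure.volumeIoiPow (Module.finrank ℝ E - 1)))
      (μ.toSphere.prod (radialMeasure (Module.finrank ℝ E - 1))) :=
    (MeasurePreserving.id _).prod (measurable_subtype_coe.measurePreserving _)
  refine ⟨by fun_prop, ?_⟩
  rw [← hid.map_eq, Measure.map_map (by fun_prop) (by fun_prop)]
  exact hΦ.map_eq

theorem lintegral_polar {h : E → ℝ≥0∞} (hh : Measurable h) :
    ∫⁻ x, h x ∂μ = ∫⁻ θ, ∫⁻ r, h (r • (θ : E)) ∂radialMeasure (Module.finrank ℝ E - 1)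
      ∂μ.toSphere := by
  rw [← (measurePreserving_smul_sphere μ).lintegral_comp hh,
    lintegral_prod _ (by fun_prop)]

theorem radialMeasure_Ioo_le (d : ℕ) {a b : ℝ} (hb : 0 ≤ b) :
    radialMeasure d (Ioo a b) ≤ ENNReal.ofReal (b ^ d * (b - a)) := by
  rw [radialMeasure_apply d measurableSet_Ioo]
  calc ∫⁻ r in Ioi 0 ∩ Ioo a b, ENNReal.ofReal (r ^ d)
      ≤ ∫⁻ _ in Ioi 0 ∩ Ioo a b, ENNReal.ofReal (b ^ d) := by
        refine setLIntegral_mono' (measurableSet_Ioi.inter measurableSet_Ioo) fun r hr ↦ ?_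
        have : 0 ≤ r := hr.1.le
        gcongr
        exact hr.2.2.le
    _ ≤ ENNReal.ofReal (b ^ d) * volume (Ioo a b) := by
        rw [setLIntegral_const]
        gcongr
        exact Set.inter_subset_right
    _ = ENNReal.ofReal (b ^ d * (b - a)) := by
        rw [Real.volume_Ioo, ENNReal.ofReal_mul (pow_nonneg hb d)]

theorem le_radialMeasure_Ico (d : ℕ) {a b : ℝ} (ha : 0 < a) :
    ENNReal.ofReal (a ^ d * (b - a)) ≤ radialMeasure d (Ico a b) := by
  have hsub : Ioi 0 ∩ Ico a b = Ico a b :=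
    Set.inter_eq_right.2 fun r hr ↦ ha.trans_le hr.1
  rw [radialMeasure_apply d measurableSet_Ico, hsub, ENNReal.ofReal_mul (by positivity),
    ← Real.volume_Ico, ← setLIntegral_const]
  refine setLIntegral_mono' measurableSet_Ico fun r hr ↦ ?_
  gcongr
  exact hr.1

theorem exists_mul_pow_le_toSphere_ball : ∃ κ : ℝ, 0 < κ ∧ ∀ (θ : sphere (0 : E) 1) (ε : ℝ),
    0 < ε → ε ≤ 2 → ENNReal.ofReal (κ * ε ^ (Module.finrank ℝ E - 1)) ≤
      μ.toSphere (ball θ ε) := by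
  set d := Module.finrank ℝ E - 1
  have hdim : Module.finrank ℝ E = d + 1 := (Nat.sub_add_cancel Module.finrank_pos).symm
  have hV : 0 < μ.real (ball 0 1) :=
    ENNReal.toReal_pos (measure_ball_pos μ _ one_pos).ne' measure_ball_lt_top.ne
  refine ⟨μ.real (ball 0 1) / 2 ^ (2 * d + 1), by positivity, fun θ ε hε hε2 ↦ ?_⟩
  have hsub : (fun p : sphere (0 : E) 1 × ℝ ↦ p.2 • (p.1 : E)) ⁻¹' ball (θ : E) (ε / 2)
      ≤ᵐ[μ.toSphere.prod (radialMeasure d)] ball θ ε ×ˢ Ioo (1 - ε / 2) (1 + ε / 2) := by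
    filter_upwards [Measure.quasiMeasurePreserving_snd.ae (ae_radialMeasure_pos d)] with p hp hmem
    obtain ⟨hr, hθ⟩ := abs_sub_one_lt_of_smul_mem_ball hp hmem
    obtain ⟨h1, h2⟩ := abs_lt.1 hr
    rw [mul_div_cancel₀ ε two_ne_zero] at hθ
    exact ⟨hθ, by linarith, by linarith⟩
  have key : ENNReal.ofReal ((ε / 2) ^ (d + 1)) * μ (ball 0 1) ≤
      μ.toSphere (ball θ ε) * ENNReal.ofReal (2 ^ d * ε) := by
    calc _ = μ (ball (θ : E) (ε / 2)) := by
          rw [μ.addHaar_ball_of_pos _ (half_pos hε), hdim]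
      _ ≤ μ.toSphere (ball θ ε) * radialMeasure d (Ioo (1 - ε / 2) (1 + ε / 2)) := by
          rw [← (measurePreserving_smul_sphere μ).measure_preimage
            measurableSet_ball.nullMeasurableSet, ← Measure.prod_prod]
          exact measure_mono_ae hsub
      _ ≤ _ := by
          gcongr
          refine (radialMeasure_Ioo_le d (by linarith)).trans (ENNReal.ofReal_le_ofReal ?_)
          calc _ ≤ (2 : ℝ) ^ d * (1 + ε / 2 - (1 - ε / 2)) := by
                gcongr
                · linarith
                · linarith
            _ = 2 ^ d * ε := by ring
  have hreal := ENNReal.toReal_mono (by finiteness) key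
  rw [ENNReal.toReal_mul, ENNReal.toReal_mul, ENNReal.toReal_ofReal (by positivity),
    ENNReal.toReal_ofReal (by positivity), ← measureReal_def, ← measureReal_def] at hreal
  rw [ENNReal.ofReal_le_iff_le_toReal (by finiteness), ← measureReal_def, div_mul_eq_mul_div,
    div_le_iff₀ (by positivity)]
  refine le_of_mul_le_mul_right ?_ hε
  calc μ.real (ball 0 1) * ε ^ d * ε = 2 ^ (d + 1) * ((ε / 2) ^ (d + 1) * μ.real (ball 0 1)) := by
        rw [div_pow, pow_succ ε]; field_simp
    _ ≤ 2 ^ (d + 1) * (μ.toSphere.real (ball θ ε) * (2 ^ d * ε)) := by gcongr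
    _ = _ := by ring

end Polar

/-! ### Star bodies -/

section StarBody

variable {E : Type*} [NormedAddCommGroup E] [NormedSpace ℝ E]

/-- The open star-shaped set about `0` with radial function `ρ`, i.e. the union of the segments
`[0, ρ θ) • θ` over all unit vectors `θ`. -/
def starBody (ρ : sphere (0 : E) 1 → ℝ) : Set E :=
  {x | ∃ θ : sphere (0 : E) 1, ∃ r, 0 ≤ r ∧ r < ρ θ ∧ r • (θ : E) = x}

theorem isOpenEmbedding_smul_sphere :
    Topology.IsOpenEmbedding fun p : sphere (0 : E) 1 × Ioi (0 : ℝ) ↦ (p.2 : ℝ) • (p.1 : E) :=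
  isOpen_compl_singleton.isOpenEmbedding_subtypeVal.comp
    (homeomorphUnitSphereProd E).symm.isOpenEmbedding

theorem exists_smul_sphere_eq [Nontrivial E] (x : E) :
    ∃ θ : sphere (0 : E) 1, ‖x‖ • (θ : E) = x := by
  rcases eq_or_ne x 0 with rfl | hx
  · obtain ⟨θ⟩ := NormedSpace.sphere_nonempty (x := (0 : E)).2 zero_le_one |>.to_subtype
    exact ⟨θ, by simp⟩
  · exact ⟨⟨‖x‖⁻¹ • x, by simp [norm_smul, hx]⟩, by simp [smul_smul, hx]⟩

theorem smul_mem_starBody {ρ : sphere (0 : E) 1 → ℝ} {θ : sphere (0 : E) 1} {r : ℝ} (hr : 0 < r) :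
    r • (θ : E) ∈ starBody ρ ↔ r < ρ θ := by
  refine ⟨?_, fun h ↦ ⟨θ, r, hr.le, h, rfl⟩⟩
  rintro ⟨φ, s, hs, hsφ, heq⟩
  have hrs : s = r := by
    simpa [norm_smul, abs_of_pos hr, abs_of_nonneg hs] using congrArg norm heq
  subst hrs
  rwa [Subtype.ext (smul_right_injective E hr.ne' heq)] at hsφ

theorem starBody_const [Nontrivial E] (R : ℝ) : starBody (fun _ ↦ R) = ball (0 : E) R := by
  ext x
  rw [mem_ball_zero_iff]
  constructor
  · rintro ⟨θ, r, hr, hrR, rfl⟩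
    simpa [norm_smul, abs_of_nonneg hr] using hrR
  · intro hx
    obtain ⟨θ, hθ⟩ := exists_smul_sphere_eq x
    exact ⟨θ, ‖x‖, norm_nonneg x, hx, hθ⟩

theorem starBody_mono {ρ ρ' : sphere (0 : E) 1 → ℝ} (h : ρ ≤ ρ') : starBody ρ ⊆ starBody ρ' :=
  fun _ ⟨θ, r, hr, hrρ, hx⟩ ↦ ⟨θ, r, hr, hrρ.trans_le (h θ), hx⟩

theorem frontier_starBody_subset [Nontrivial E] {ρ : sphere (0 : E) 1 → ℝ} (hρ : Continuous ρ)
    {m : ℝ} (hm : 0 < m) (hmρ : ∀ θ, m ≤ ρ θ) :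
    frontier (starBody ρ) ⊆ Set.range fun θ ↦ ρ θ • (θ : E) := by
  intro x hx
  obtain ⟨θ, hθ⟩ := exists_smul_sphere_eq x
  rcases eq_or_ne x 0 with rfl | hx0
  · have hball : ball (0 : E) m ⊆ starBody ρ := starBody_const (E := E) m ▸ starBody_mono hmρ
    exact absurd (mem_interior.2 ⟨_, hball, isOpen_ball, mem_ball_self hm⟩) hx.2
  have hr : 0 < ‖x‖ := norm_pos_iff.2 hx0
  let p : sphere (0 : E) 1 × Ioi (0 : ℝ) := (θ, ⟨‖x‖, hr⟩)
  rcases lt_trichotomy ‖x‖ (ρ θ) with h | h | h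
  · refine absurd (mem_interior.2 ⟨_, ?_, isOpenEmbedding_smul_sphere.isOpenMap
      {q : sphere (0 : E) 1 × Ioi (0 : ℝ) | q.2 < ρ q.1} (isOpen_lt (by fun_prop) (by fun_prop)),
      p, h, hθ⟩) hx.2
    rintro _ ⟨q, hq, rfl⟩
    exact (smul_mem_starBody q.2.2).2 hq
  · exact ⟨θ, by simpa only [h] using hθ⟩
  · obtain ⟨_, ⟨q, hq, rfl⟩, hqρ⟩ := mem_closure_iff.1 hx.1 _ (isOpenEmbedding_smul_sphere.isOpenMap
      {q : sphere (0 : E) 1 × Ioi (0 : ℝ) | ρ q.1 < q.2} (isOpen_lt (by fun_prop) (by fun_prop)))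
      ⟨p, h, hθ⟩
    exact absurd ((smul_mem_starBody q.2.2).1 hqρ) hq.not_gt

variable [FiniteDimensional ℝ E] [MeasurableSpace E] [BorelSpace E]

theorem measurableSet_starBody {ρ : sphere (0 : E) 1 → ℝ} (hρ : Measurable ρ) :
    MeasurableSet (starBody ρ) := by
  have hdiff : starBody ρ \ {0} = (fun p : sphere (0 : E) 1 × Ioi (0 : ℝ) ↦ (p.2 : ℝ) • (p.1 : E))
      '' {p | p.2 < ρ p.1} := by
    ext x
    constructor
    · rintro ⟨⟨θ, r, hr, hrρ, rfl⟩, hne⟩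
      have hr0 : 0 < r := hr.lt_of_ne' fun h ↦ hne (by simp [h])
      exact ⟨(θ, ⟨r, hr0⟩), hrρ, rfl⟩
    · rintro ⟨⟨θ, r⟩, hr, rfl⟩
      exact ⟨(smul_mem_starBody r.2).2 hr,
        smul_ne_zero (Set.mem_Ioi.1 r.2).ne' (ne_zero_of_mem_unit_sphere θ)⟩
  rw [← Set.sdiff_union_inter (starBody ρ) {0}, hdiff]
  exact (isOpenEmbedding_smul_sphere.measurableEmbedding.measurableSet_image.2
    (measurableSet_lt (by fun_prop) (by fun_prop))).union
      (Set.subsingleton_singleton.anti Set.inter_subset_right).measurableSet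

variable [Nontrivial E] (μ : Measure E) [μ.IsAddHaarMeasure]

theorem setLIntegral_starBody {ρ : sphere (0 : E) 1 → ℝ} (hρ : Measurable ρ) {h : E → ℝ≥0∞}
    (hh : Measurable h) :
    ∫⁻ x in starBody ρ, h x ∂μ =
      ∫⁻ θ, ∫⁻ r in Iio (ρ θ), h (r • (θ : E)) ∂radialMeasure (Module.finrank ℝ E - 1)
        ∂μ.toSphere := by
  have hmeas := measurableSet_starBody hρ
  rw [← lintegral_indicator hmeas, lintegral_polar μ (hh.indicator hmeas)]
  refine lintegral_congr fun θ ↦ ?_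
  rw [← lintegral_indicator measurableSet_Iio]
  refine lintegral_congr_ae ?_
  filter_upwards [ae_radialMeasure_pos _] with r hr
  simp only [Set.indicator, smul_mem_starBody hr, Set.mem_Iio]

end StarBody

/-! ### Odd perturbations of the unit ball -/

theorem one_add_rpow_add_one_sub_rpow_le {p t : ℝ} (hp0 : 0 ≤ p) (hp2 : p ≤ 2) (ht : |t| ≤ 1) :
    (1 + t) ^ p + (1 - t) ^ p ≤ 2 * (1 + t ^ 2) := by
  have rpow_le {x : ℝ} (hx : 0 ≤ x) : x ^ p ≤ 1 + p / 2 * (x ^ 2 - 1) := by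
    calc x ^ p = (1 + (x ^ 2 - 1)) ^ (p / 2) := by
          rw [add_sub_cancel, ← Real.rpow_natCast_mul hx]
          congr 1
          push_cast
          ring
      _ ≤ 1 + p / 2 * (x ^ 2 - 1) :=
          rpow_one_add_le_one_add_mul_self (by nlinarith) (by linarith) (by linarith)
  obtain ⟨h1, h2⟩ := abs_le.1 ht
  nlinarith [rpow_le (show 0 ≤ 1 + t by linarith), rpow_le (show 0 ≤ 1 - t by linarith),
    sq_nonneg t]

theorem two_mul_lintegral_mul_of_comp_eq {X : Type*} [MeasurableSpace X] {σ : Measure X}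
    {T : X → X} (hT : MeasurePreserving T σ σ) {w h : X → ℝ≥0∞} (hw : Measurable w)
    (hh : Measurable h) (hhT : ∀ x, h (T x) = h x) :
    2 * ∫⁻ x, w x * h x ∂σ = ∫⁻ x, (w x + w (T x)) * h x ∂σ := by
  have hcomp : ∫⁻ x, w (T x) * h x ∂σ = ∫⁻ x, w x * h x ∂σ := by
    simpa only [hhT] using hT.lintegral_comp (f := fun x ↦ w x * h x) (by fun_prop)
  simp only [add_mul]
  rw [lintegral_add_left (by fun_prop), hcomp, two_mul]

section OddProfile

variable {E : Type*} [NormedAddCommGroup E]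

/-- An odd function on the unit sphere with amplitude at most `δ ≤ 1 / 2` and Lipschitz constant
at most `L ≤ 1`: the admissible perturbations of the unit ball. -/
structure IsOddProfile (δ L : ℝ) (g : sphere (0 : E) 1 → ℝ) : Prop where
  map_neg : ∀ θ, g (-θ) = -g θ
  abs_le : ∀ θ, |g θ| ≤ δ
  le_half : δ ≤ 1 / 2
  abs_sub_le : ∀ θ φ, |g θ - g φ| ≤ L * dist θ φ
  le_one : L ≤ 1

namespace IsOddProfile

variable {δ L : ℝ} {g : sphere (0 : E) 1 → ℝ}

theorem continuous (hg : IsOddProfile δ L g) : Continuous g :=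
  (LipschitzWith.of_dist_le' hg.abs_sub_le).continuous

theorem half_le_one_add (hg : IsOddProfile δ L g) (θ : sphere (0 : E) 1) : 1 / 2 ≤ 1 + g θ := by
  linarith [(_root_.abs_le.1 (hg.abs_le θ)).1, hg.le_half]

theorem one_add_le (hg : IsOddProfile δ L g) (θ : sphere (0 : E) 1) : 1 + g θ ≤ 3 / 2 := by
  linarith [(_root_.abs_le.1 (hg.abs_le θ)).2, hg.le_half]

theorem one_add_pos (hg : IsOddProfile δ L g) (θ : sphere (0 : E) 1) : 0 < 1 + g θ := by
  linarith [hg.half_le_one_add θ]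

theorem sq_le_sq (hg : IsOddProfile δ L g) (θ : sphere (0 : E) 1) : g θ ^ 2 ≤ δ ^ 2 :=
  _root_.sq_le_sq.2 ((hg.abs_le θ).trans (le_abs_self δ))

theorem rpow_add_rpow_neg_le (hg : IsOddProfile δ L g) {p : ℝ} (hp0 : 0 ≤ p) (hp2 : p ≤ 2)
    (θ : sphere (0 : E) 1) :
    ENNReal.ofReal ((1 + g θ) ^ p) + ENNReal.ofReal ((1 + g (-θ)) ^ p) ≤
      2 * ENNReal.ofReal (1 + δ ^ 2) := by
  have hp (φ) : 0 ≤ (1 + g φ) ^ p := Real.rpow_nonneg (hg.one_add_pos φ).le p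
  have hg1 : |g θ| ≤ 1 := by linarith [hg.abs_le θ, hg.le_half]
  rw [← ENNReal.ofReal_add (hp _) (hp _), ← ENNReal.ofReal_ofNat 2,
    ← ENNReal.ofReal_mul zero_le_two, hg.map_neg, ← sub_eq_add_neg]
  refine ENNReal.ofReal_le_ofReal ((one_add_rpow_add_one_sub_rpow_le hp0 hp2 hg1).trans ?_)
  linarith [hg.sq_le_sq θ]

section Lintegral

variable [MeasurableSpace E] [BorelSpace E] {σ : Measure (sphere (0 : E) 1)}

theorem lintegral_rpow_mul_le (hg : IsOddProfile δ L g)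
    (hσ : MeasurePreserving (fun θ : sphere (0 : E) 1 ↦ -θ) σ σ) {p : ℝ} (hp0 : 0 ≤ p)
    (hp2 : p ≤ 2) {h : sphere (0 : E) 1 → ℝ≥0∞} (hh : Measurable h) (hneg : ∀ θ, h (-θ) = h θ) :
    ∫⁻ θ, ENNReal.ofReal ((1 + g θ) ^ p) * h θ ∂σ ≤
      ENNReal.ofReal (1 + δ ^ 2) * ∫⁻ θ, h θ ∂σ := by
  have hgm := hg.continuous.measurable
  refine (ENNReal.mul_le_mul_iff_right two_ne_zero ofNat_ne_top).1 ?_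
  rw [two_mul_lintegral_mul_of_comp_eq hσ (by fun_prop) hh hneg, ← mul_assoc,
    ← lintegral_const_mul _ hh]
  gcongr with θ
  exact hg.rpow_add_rpow_neg_le hp0 hp2 θ

theorem lintegral_one_add_mul (hg : IsOddProfile δ L g)
    (hσ : MeasurePreserving (fun θ : sphere (0 : E) 1 ↦ -θ) σ σ)
    {h : sphere (0 : E) 1 → ℝ≥0∞} (hh : Measurable h) (hneg : ∀ θ, h (-θ) = h θ) :
    ∫⁻ θ, ENNReal.ofReal (1 + g θ) * h θ ∂σ = ∫⁻ θ, h θ ∂σ := by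
  have hgm := hg.continuous.measurable
  have hsum (θ) : ENNReal.ofReal (1 + g θ) + ENNReal.ofReal (1 + g (-θ)) = 2 := by
    rw [← ENNReal.ofReal_add (hg.one_add_pos _).le (hg.one_add_pos _).le, hg.map_neg,
      ← ENNReal.ofReal_ofNat 2]
    ring_nf
  refine (ENNReal.mul_right_inj two_ne_zero ofNat_ne_top).1 ?_
  rw [two_mul_lintegral_mul_of_comp_eq hσ (by fun_prop) hh hneg, ← lintegral_const_mul _ hh]
  simp only [hsum]

end Lintegral

end IsOddProfile

variable [NormedSpace ℝ E]

/-- The radial function of the star body whose volume element in direction `θ` is `1 + g θ` times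
that of the unit ball. -/
def radialFun (g : sphere (0 : E) 1 → ℝ) (θ : sphere (0 : E) 1) : ℝ :=
  (1 + g θ) ^ (1 / (Module.finrank ℝ E : ℝ))

namespace IsOddProfile

variable {δ L : ℝ} {g : sphere (0 : E) 1 → ℝ}

theorem radialFun_pos (hg : IsOddProfile δ L g) (θ : sphere (0 : E) 1) : 0 < radialFun g θ :=
  Real.rpow_pos_of_pos (hg.one_add_pos θ) _

theorem half_le_radialFun (hg : IsOddProfile δ L g) (θ : sphere (0 : E) 1) :
    1 / 2 ≤ radialFun g θ :=
  calc (1 / 2 : ℝ) = (1 / 2) ^ (1 : ℝ) := (Real.rpow_one _).symm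
    _ ≤ (1 / 2) ^ (1 / (Module.finrank ℝ E : ℝ)) :=
        Real.rpow_le_rpow_of_exponent_ge (by norm_num) (by norm_num)
          (by simpa using Nat.cast_inv_le_one (α := ℝ) (Module.finrank ℝ E))
    _ ≤ radialFun g θ :=
        Real.rpow_le_rpow (by norm_num) (hg.half_le_one_add θ) (by positivity)

theorem radialFun_le (hg : IsOddProfile δ L g) (θ : sphere (0 : E) 1) :
    radialFun g θ ≤ 3 / 2 :=
  calc radialFun g θ ≤ (3 / 2) ^ (1 / (Module.finrank ℝ E : ℝ)) :=
        Real.rpow_le_rpow (hg.one_add_pos θ).le (hg.one_add_le θ) (by positivity)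
    _ ≤ (3 / 2) ^ (1 : ℝ) :=
        Real.rpow_le_rpow_of_exponent_le (by norm_num)
          (by simpa using Nat.cast_inv_le_one (α := ℝ) (Module.finrank ℝ E))
    _ = 3 / 2 := Real.rpow_one _

theorem continuous_radialFun (hg : IsOddProfile δ L g) : Continuous (radialFun g) :=
  (continuous_const.add hg.continuous).rpow_const fun θ ↦ .inl (hg.one_add_pos θ).ne'

variable [FiniteDimensional ℝ E] [Nontrivial E]

theorem radialFun_rpow (hg : IsOddProfile δ L g) (p : ℝ) (θ : sphere (0 : E) 1) :
    radialFun g θ ^ (Module.finrank ℝ E + p) = (1 + g θ) ^ (1 + p / Module.finrank ℝ E) := by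
  have hn : (Module.finrank ℝ E : ℝ) ≠ 0 := by exact_mod_cast Module.finrank_pos.ne'
  rw [radialFun, ← Real.rpow_mul (hg.one_add_pos θ).le]
  congr 1
  field_simp

theorem radialFun_pow_finrank (hg : IsOddProfile δ L g) (θ : sphere (0 : E) 1) :
    radialFun g θ ^ Module.finrank ℝ E = 1 + g θ := by
  simpa using hg.radialFun_rpow 0 θ

end IsOddProfile

end OddProfile

section HomogeneousIntegral

variable {E : Type*} [NormedAddCommGroup E] [NormedSpace ℝ E] [FiniteDimensional ℝ E]
  [MeasurableSpace E] [BorelSpace E] [Nontrivial E] (μ : Measure E) [μ.IsAddHaarMeasure]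

theorem setLIntegral_starBody_of_homogeneous {ρ : sphere (0 : E) 1 → ℝ} (hρ : Measurable ρ)
    (hpos : ∀ θ, 0 < ρ θ) {h : E → ℝ≥0∞} (hh : Measurable h) {p : ℝ}
    (hhom : ∀ c : ℝ, 0 < c → ∀ x, h (c • x) = ENNReal.ofReal (c ^ p) * h x) :
    ∫⁻ x in starBody ρ, h x ∂μ =
      ∫⁻ θ, ENNReal.ofReal (ρ θ ^ (Module.finrank ℝ E + p)) *
        ∫⁻ r in Iio 1, h (r • (θ : E)) ∂radialMeasure (Module.finrank ℝ E - 1) ∂μ.toSphere := by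
  rw [setLIntegral_starBody μ hρ hh]
  refine lintegral_congr fun θ ↦ ?_
  rw [setLIntegral_Iio_radialMeasure _ (hpos θ) (by fun_prop),
    Nat.sub_add_cancel Module.finrank_pos]
  simp only [mul_smul, hhom _ (hpos θ)]
  rw [lintegral_const_mul _ (by fun_prop), ← mul_assoc, ← ENNReal.ofReal_mul (by
    have := hpos θ; positivity), Real.rpow_add (hpos θ), Real.rpow_natCast]

theorem setLIntegral_ball_zero_one {h : E → ℝ≥0∞} (hh : Measurable h) :
    ∫⁻ x in ball 0 1, h x ∂μ =
      ∫⁻ θ, ∫⁻ r in Iio 1, h (r • (θ : E)) ∂radialMeasure (Module.finrank ℝ E - 1)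
        ∂μ.toSphere := by
  rw [← starBody_const, setLIntegral_starBody μ measurable_const hh]

theorem measure_ball_rpow_one_div_finrank {t : ℝ} (ht : 0 ≤ t) :
    μ (ball 0 (t ^ (1 / (Module.finrank ℝ E : ℝ)))) = ENNReal.ofReal t * μ (ball 0 1) := by
  rw [Measure.addHaar_ball _ _ (by positivity), one_div,
    Real.rpow_inv_natCast_pow ht Module.finrank_pos.ne']

namespace IsOddProfile

variable {δ L : ℝ} {g : sphere (0 : E) 1 → ℝ}

theorem setLIntegral_starBody_le (hg : IsOddProfile δ L g) {h : E → ℝ≥0∞} (hh : Measurable h)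
    (hneg : ∀ x, h (-x) = h x) {p : ℝ} (hp : -(Module.finrank ℝ E : ℝ) ≤ p)
    (hp' : p ≤ Module.finrank ℝ E)
    (hhom : ∀ c : ℝ, 0 < c → ∀ x, h (c • x) = ENNReal.ofReal (c ^ p) * h x) :
    ∫⁻ x in starBody (radialFun g), h x ∂μ ≤
      ENNReal.ofReal (1 + δ ^ 2) * ∫⁻ x in ball 0 1, h x ∂μ := by
  have hn : (0 : ℝ) < Module.finrank ℝ E := by exact_mod_cast Module.finrank_pos
  rw [setLIntegral_starBody_of_homogeneous μ hg.continuous_radialFun.measurable hg.radialFun_pos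
    hh hhom, setLIntegral_ball_zero_one μ hh]
  simp only [hg.radialFun_rpow]
  refine hg.lintegral_rpow_mul_le (measurePreserving_neg_sphere μ) ?_ ?_ ?_ fun θ ↦ ?_
  · linarith [(le_div_iff₀ hn).2 (show -1 * (Module.finrank ℝ E : ℝ) ≤ p by linarith)]
  · linarith [(div_le_one hn).2 hp']
  · exact Measurable.lintegral_prod_right' (f := fun q : sphere (0 : E) 1 × ℝ ↦ h (q.2 • q.1))
      (by fun_prop)
  · simp [hneg]

theorem measure_starBody (hg : IsOddProfile δ L g) :
    μ (starBody (radialFun g)) = μ (ball 0 1) := by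
  have hρ := hg.continuous_radialFun.measurable
  rw [← setLIntegral_one, ← setLIntegral_one, setLIntegral_starBody_of_homogeneous μ hρ
    hg.radialFun_pos measurable_const (p := 0) (by simp), setLIntegral_ball_zero_one μ
    measurable_const]
  simp only [add_zero, Real.rpow_natCast, hg.radialFun_pow_finrank]
  exact hg.lintegral_one_add_mul (measurePreserving_neg_sphere μ) measurable_const fun _ ↦ rfl

theorem measure_symmDiff_starBody_le (hg : IsOddProfile δ L g) :
    μ (symmDiff (ball 0 1) (starBody (radialFun g))) ≤
      ENNReal.ofReal (2 * δ) * μ (ball 0 1) := by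
  obtain ⟨θ⟩ : Nonempty (sphere (0 : E) 1) := (NormedSpace.sphere_nonempty.2 zero_le_one).to_subtype
  have hδ : 0 ≤ δ := (abs_nonneg _).trans (hg.abs_le θ)
  have hδ' := hg.le_half
  set a := (1 - δ) ^ (1 / (Module.finrank ℝ E : ℝ)) with ha
  set b := (1 + δ) ^ (1 / (Module.finrank ℝ E : ℝ)) with hb
  have hab : ball (0 : E) a ⊆ ball 0 b := ball_subset_ball (by rw [ha, hb]; gcongr <;> linarith)
  have ha1 : ball (0 : E) a ⊆ ball 0 1 :=
    ball_subset_ball (Real.rpow_le_one (by linarith) (by linarith) (by positivity))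
  have hb1 : ball (0 : E) 1 ⊆ ball 0 b :=
    ball_subset_ball (Real.one_le_rpow (by linarith) (by positivity))
  have haS : ball (0 : E) a ⊆ starBody (radialFun g) := by
    rw [← starBody_const]
    exact starBody_mono fun φ ↦ Real.rpow_le_rpow (by linarith)
      (by linarith [(_root_.abs_le.1 (hg.abs_le φ)).1]) (by positivity)
  have hbS : starBody (radialFun g) ⊆ ball (0 : E) b := by
    rw [← starBody_const]
    exact starBody_mono fun φ ↦ Real.rpow_le_rpow (hg.one_add_pos φ).le
      (by linarith [(_root_.abs_le.1 (hg.abs_le φ)).2]) (by positivity)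
  calc μ (symmDiff (ball 0 1) (starBody (radialFun g))) ≤ μ (ball 0 b \ ball 0 a) := by
        rw [symmDiff_eq_sup_sdiff_inf]
        exact measure_mono (sdiff_le_sdiff (Set.union_subset hb1 hbS) (Set.subset_inter ha1 haS))
    _ = ENNReal.ofReal (2 * δ) * μ (ball 0 1) := by
        rw [measure_sdiff hab measurableSet_ball.nullMeasurableSet measure_ball_lt_top.ne,
          measure_ball_rpow_one_div_finrank μ (by linarith),
          measure_ball_rpow_one_div_finrank μ (by linarith),
          ← ENNReal.sub_mul fun _ _ ↦ measure_ball_lt_top.ne, ← ENNReal.ofReal_sub _ (by linarith)]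
        ring_nf

theorem measure_smul_starBody (hg : IsOddProfile δ L g) {R : ℝ} (hR : 0 < R) :
    μ (R • starBody (radialFun g)) = μ (ball 0 R) := by
  rw [Measure.addHaar_smul_of_nonneg μ hR.le, hg.measure_starBody μ, Measure.addHaar_ball μ 0 hR.le]

theorem measure_symmDiff_smul_starBody_le (hg : IsOddProfile δ L g) {R : ℝ} (hR : 0 < R) :
    μ (symmDiff (ball 0 R) (R • starBody (radialFun g))) ≤
      ENNReal.ofReal (2 * δ) * μ (ball 0 R) := by
  rw [← smul_unitBall_of_pos hR, ← Set.smul_set_symmDiff₀ hR.ne',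
    Measure.addHaar_smul_of_nonneg μ hR.le, Measure.addHaar_smul_of_nonneg μ hR.le, mul_left_comm]
  gcongr
  exact hg.measure_symmDiff_starBody_le μ

end IsOddProfile

end HomogeneousIntegral

/-! ### The Riesz energy of a perturbed ball -/

theorem lintegral_lintegral_self_add_self {X : Type*} [MeasurableSpace X] {ν : Measure X}
    [SFinite ν] {k : X → X → ℝ≥0∞} (hk : Measurable (Function.uncurry k))
    (hsymm : ∀ x y, k x y = k y x) {s t : Set X} (hs : MeasurableSet s) (ht : MeasurableSet t)
    (hst : s ⊆ t) :
    ∫⁻ x in s, ∫⁻ y in s, k x y ∂ν ∂ν + ∫⁻ x in t, ∫⁻ y in t, k x y ∂ν ∂ν =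
      2 * ∫⁻ x in s, ∫⁻ y in t, k x y ∂ν ∂ν + ∫⁻ x in t \ s, ∫⁻ y in t \ s, k x y ∂ν ∂ν := by
  have split (f : X → ℝ≥0∞) : ∫⁻ x in t, f x ∂ν = ∫⁻ x in s, f x ∂ν + ∫⁻ x in t \ s, f x ∂ν := by
    rw [← lintegral_union (ht.diff hs) Set.disjoint_sdiff_right, Set.union_sdiff_cancel hst]
  have split_inner (u : Set X) : ∫⁻ x in u, ∫⁻ y in t, k x y ∂ν ∂ν =
      ∫⁻ x in u, ∫⁻ y in s, k x y ∂ν ∂ν + ∫⁻ x in u, ∫⁻ y in t \ s, k x y ∂ν ∂ν := by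
    simp only [split (k _)]
    exact lintegral_add_left (Measurable.lintegral_prod_right' hk) _
  have swap : ∫⁻ x in t \ s, ∫⁻ y in s, k x y ∂ν ∂ν = ∫⁻ x in s, ∫⁻ y in t \ s, k x y ∂ν ∂ν := by
    rw [lintegral_lintegral_swap hk.aemeasurable]
    simp only [hsymm]
  rw [split fun x ↦ ∫⁻ y in t, k x y ∂ν, split_inner, split_inner, swap]
  ring

theorem measurable_setLIntegral_Iio {X : Type*} [MeasurableSpace X] {ν : Measure ℝ} [SFinite ν]
    {f : X → ℝ → ℝ≥0∞} (hf : Measurable (Function.uncurry f)) {c : X → ℝ} (hc : Measurable c) :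
    Measurable fun x ↦ ∫⁻ r in Iio (c x), f x r ∂ν := by
  have hind : Measurable ({q : X × ℝ | q.2 < c q.1}.indicator (Function.uncurry f)) :=
    hf.indicator (measurableSet_lt (by fun_prop) (by fun_prop))
  convert hind.lintegral_prod_right' (ν := ν) using 2 with x
  rw [← lintegral_indicator measurableSet_Iio]
  rfl

/-- The interaction energy of a set with itself for the kernel `‖x - y‖ ^ p`; the Riesz energy is
the case `p = α - n`. -/
def powerEnergy {E : Type*} [NormedAddCommGroup E] [MeasurableSpace E] (μ : Measure E) (p : ℝ)
    (S : Set E) : ℝ≥0∞ :=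
  ∫⁻ x in S, ∫⁻ y in S, ENNReal.ofReal (‖x - y‖ ^ p) ∂μ ∂μ

/-- The squared Gagliardo seminorm of a function on the unit sphere, with kernel `|θ - φ| ^ p`. -/
def gagliardoEnergy {E : Type*} [NormedAddCommGroup E] [NormedSpace ℝ E] [MeasurableSpace E]
    (μ : Measure E) (p : ℝ) (g : sphere (0 : E) 1 → ℝ) : ℝ≥0∞ :=
  ∫⁻ θ, ∫⁻ φ, ENNReal.ofReal ((g θ - g φ) ^ 2 * dist θ φ ^ p) ∂μ.toSphere ∂μ.toSphere

section RayInteraction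

variable {E : Type*} [NormedAddCommGroup E]

/-- The interaction, for the kernel `‖x - y‖ ^ p`, of the parts `s` and `t` of the rays in the
directions `θ` and `φ`, in polar coordinates. -/
def rayInteraction [NormedSpace ℝ E] (p : ℝ) (θ φ : sphere (0 : E) 1) (s t : Set ℝ) : ℝ≥0∞ :=
  ∫⁻ r in s, ∫⁻ q in t, ENNReal.ofReal (‖r • (θ : E) - q • (φ : E)‖ ^ p)
    ∂radialMeasure (Module.finrank ℝ E - 1) ∂radialMeasure (Module.finrank ℝ E - 1)

theorem norm_smul_sub_smul_sq [InnerProductSpace ℝ E] (θ φ : sphere (0 : E) 1) (a b : ℝ) :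
    ‖a • (θ : E) - b • (φ : E)‖ ^ 2 = (a - b) ^ 2 + a * b * dist θ φ ^ 2 := by
  rw [Subtype.dist_eq, dist_eq_norm, norm_sub_sq_real, norm_sub_sq_real, norm_smul, norm_smul,
    inner_smul_left, inner_smul_right, norm_eq_of_mem_sphere, norm_eq_of_mem_sphere]
  simp only [mul_one, Real.norm_eq_abs, sq_abs, conj_trivial]
  ring

theorem norm_smul_sub_smul_comm [InnerProductSpace ℝ E] (θ φ : sphere (0 : E) 1) (r q : ℝ) :
    ‖r • (θ : E) - q • (φ : E)‖ = ‖q • (θ : E) - r • (φ : E)‖ := by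
  rw [← sq_eq_sq₀ (norm_nonneg _) (norm_nonneg _), norm_smul_sub_smul_sq, norm_smul_sub_smul_sq]
  ring

section NormedSpace

variable [NormedSpace ℝ E] {p : ℝ}

theorem rayInteraction_neg_neg (θ φ : sphere (0 : E) 1) (s t : Set ℝ) :
    rayInteraction p (-θ) (-φ) s t = rayInteraction p θ φ s t := by
  have hker (r q : ℝ) : ‖r • ((-θ : sphere (0 : E) 1) : E) - q • ((-φ : sphere (0 : E) 1) : E)‖ =
      ‖r • (θ : E) - q • (φ : E)‖ := by
    rw [← norm_neg, coe_neg_sphere, coe_neg_sphere]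
    congr 1
    module
  simp only [rayInteraction, hker]

variable [FiniteDimensional ℝ E] [MeasurableSpace E] [BorelSpace E]

theorem measurable_rayInteraction_Iio {X : Type*} [MeasurableSpace X]
    {θ φ : X → sphere (0 : E) 1} (hθ : Measurable θ) (hφ : Measurable φ) {a b : X → ℝ}
    (ha : Measurable a) (hb : Measurable b) :
    Measurable fun x ↦ rayInteraction p (θ x) (φ x) (Iio (a x)) (Iio (b x)) :=
  measurable_setLIntegral_Iio (measurable_setLIntegral_Iio (X := X × ℝ)
    (f := fun z q ↦ ENNReal.ofReal (‖z.2 • (θ z.1 : E) - q • (φ z.1 : E)‖ ^ p))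
    (by fun_prop) (hb.comp measurable_fst)) ha

theorem rayInteraction_Iio_self [Nontrivial E] (θ φ : sphere (0 : E) 1) {c : ℝ} (hc : 0 < c) :
    rayInteraction p θ φ (Iio c) (Iio c) =
      ENNReal.ofReal (c ^ (Module.finrank ℝ E + (Module.finrank ℝ E + p))) *
        rayInteraction p θ φ (Iio 1) (Iio 1) := by
  have hker (r q : ℝ) : ENNReal.ofReal (‖(c * r) • (θ : E) - (c * q) • (φ : E)‖ ^ p) =
      ENNReal.ofReal (c ^ p) * ENNReal.ofReal (‖r • (θ : E) - q • (φ : E)‖ ^ p) := by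
    rw [← ENNReal.ofReal_mul (by positivity), ← Real.mul_rpow hc.le (norm_nonneg _), mul_smul,
      mul_smul, ← smul_sub, norm_smul, Real.norm_of_nonneg hc.le]
  have hinner (r : ℝ) : ∫⁻ q in Iio c, ENNReal.ofReal (‖(c * r) • (θ : E) - q • (φ : E)‖ ^ p)
      ∂radialMeasure (Module.finrank ℝ E - 1) = ENNReal.ofReal (c ^ Module.finrank ℝ E * c ^ p) *
        ∫⁻ q in Iio 1, ENNReal.ofReal (‖r • (θ : E) - q • (φ : E)‖ ^ p)
          ∂radialMeasure (Module.finrank ℝ E - 1) := by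
    rw [setLIntegral_Iio_radialMeasure _ hc (by fun_prop),
      Nat.sub_add_cancel Module.finrank_pos, ENNReal.ofReal_mul (by positivity), mul_assoc]
    simp only [hker]
    rw [lintegral_const_mul' _ _ ofReal_ne_top]
  rw [rayInteraction, setLIntegral_Iio_radialMeasure _ hc
    (measurable_setLIntegral_Iio (by fun_prop) measurable_const),
    Nat.sub_add_cancel Module.finrank_pos]
  simp only [hinner]
  rw [lintegral_const_mul' _ _ ofReal_ne_top, ← mul_assoc, ← ENNReal.ofReal_mul (by positivity),
    Real.rpow_add hc, Real.rpow_add hc, Real.rpow_natCast]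
  rfl

end NormedSpace

variable [InnerProductSpace ℝ E] {p : ℝ}

theorem rayInteraction_comm (θ φ : sphere (0 : E) 1) (s t : Set ℝ) :
    rayInteraction p θ φ s t = rayInteraction p φ θ s t :=
  lintegral_congr fun r ↦ lintegral_congr fun q ↦ by
    rw [norm_smul_sub_smul_comm, norm_sub_rev]

variable [FiniteDimensional ℝ E] [MeasurableSpace E] [BorelSpace E]

theorem rayInteraction_swap (θ φ : sphere (0 : E) 1) (s t : Set ℝ) :
    rayInteraction p θ φ s t = rayInteraction p θ φ t s := by
  rw [rayInteraction, lintegral_lintegral_swap (by fun_prop)]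
  exact lintegral_congr fun r ↦ lintegral_congr fun q ↦ by rw [norm_smul_sub_smul_comm]

theorem rayInteraction_Iio_add_rayInteraction_Iio (θ φ : sphere (0 : E) 1) (a b : ℝ) :
    rayInteraction p θ φ (Iio a) (Iio a) + rayInteraction p θ φ (Iio b) (Iio b) =
      2 * rayInteraction p θ φ (Iio a) (Iio b) +
        rayInteraction p θ φ (Ico (min a b) (max a b)) (Ico (min a b) (max a b)) := by
  wlog hab : a ≤ b generalizing a b
  · rw [add_comm, rayInteraction_swap θ φ (Iio a) (Iio b), min_comm, max_comm]
    exact this b a (le_of_not_ge hab)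
  have hdiff : Iio b \ Iio a = Ico a b := by ext; simp
  rw [min_eq_left hab, max_eq_right hab, ← hdiff]
  exact lintegral_lintegral_self_add_self
    (k := fun r q ↦ ENNReal.ofReal (‖r • (θ : E) - q • (φ : E)‖ ^ p)) (by fun_prop)
    (fun r q ↦ by rw [norm_smul_sub_smul_comm]) measurableSet_Iio measurableSet_Iio
    (Set.Iio_subset_Iio hab)

end RayInteraction

section PowerEnergy

variable {E : Type*} [NormedAddCommGroup E]

theorem powerEnergy_starBody [NormedSpace ℝ E] [FiniteDimensional ℝ E] [MeasurableSpace E]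
    [BorelSpace E] [Nontrivial E] (μ : Measure E) [μ.IsAddHaarMeasure] (p : ℝ)
    {ρ : sphere (0 : E) 1 → ℝ} (hρ : Measurable ρ) :
    powerEnergy μ p (starBody ρ) =
      ∫⁻ θ, ∫⁻ φ, rayInteraction p θ φ (Iio (ρ θ)) (Iio (ρ φ)) ∂μ.toSphere ∂μ.toSphere := by
  have hker : Measurable fun z : (E × sphere (0 : E) 1) × ℝ ↦
    ENNReal.ofReal (‖z.1.1 - z.2 • (z.1.2 : E)‖ ^ p) := by fun_prop
  have hray : Measurable fun z : E × sphere (0 : E) 1 ↦ ∫⁻ q in Iio (ρ z.2),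
      ENNReal.ofReal (‖z.1 - q • (z.2 : E)‖ ^ p) ∂radialMeasure (Module.finrank ℝ E - 1) :=
    measurable_setLIntegral_Iio hker (hρ.comp measurable_snd)
  have hinner (x : E) := setLIntegral_starBody μ hρ
    (h := fun y ↦ ENNReal.ofReal (‖x - y‖ ^ p)) (by fun_prop)
  simp only [powerEnergy, hinner]
  rw [setLIntegral_starBody μ hρ hray.lintegral_prod_right']
  refine lintegral_congr fun θ ↦ ?_
  exact lintegral_lintegral_swap (f := fun r φ ↦ ∫⁻ q in Iio (ρ φ),
    ENNReal.ofReal (‖r • (θ : E) - q • (φ : E)‖ ^ p) ∂radialMeasure (Module.finrank ℝ E - 1))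
    (hray.comp (f := fun z : ℝ × sphere (0 : E) 1 ↦ (z.1 • (θ : E), z.2))
      (by fun_prop)).aemeasurable

theorem le_rayInteraction_Ico [NormedSpace ℝ E] {p : ℝ} (hp : p ≤ 0) {θ φ : sphere (0 : E) 1}
    {a b : ℝ} (ha : 1 / 2 ≤ a) (hab : a ≤ b) (hb : b ≤ 3 / 2) (hba : b - a ≤ dist θ φ) :
    ENNReal.ofReal ((3 * dist θ φ) ^ p * ((1 / 2) ^ (Module.finrank ℝ E - 1) * (b - a)) ^ 2) ≤
      rayInteraction p θ φ (Ico a b) (Ico a b) := by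
  rcases eq_or_ne θ φ with rfl | hne
  · simp [show b - a = 0 by rw [dist_self] at hba; linarith]
  have hdist : 0 < dist θ φ := dist_pos.2 hne
  have hker {r q : ℝ} (hr : r ∈ Ico a b) (hq : q ∈ Ico a b) :
      (3 * dist θ φ) ^ p ≤ ‖r • (θ : E) - q • (φ : E)‖ ^ p := by
    have hr0 : 0 < r := by linarith [hr.1]
    have hq0 : 0 < q := by linarith [hq.1]
    have hpos : 0 < ‖r • (θ : E) - q • (φ : E)‖ := by
      rw [norm_sub_pos_iff]
      intro h
      have hrq : r = q := by simpa [norm_smul, abs_of_pos, hr0, hq0] using congrArg norm h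
      exact hne (Subtype.ext (smul_right_injective E hr0.ne' (by simpa only [hrq] using h)))
    refine Real.rpow_le_rpow_of_nonpos hpos ?_ hp
    have hsplit : r • (θ : E) - q • (φ : E) = (r - q) • (θ : E) + q • ((θ : E) - φ) := by module
    calc ‖r • (θ : E) - q • (φ : E)‖ ≤ |r - q| + q * dist θ φ := by
          rw [hsplit, Subtype.dist_eq, dist_eq_norm]
          refine (norm_add_le _ _).trans_eq ?_
          rw [norm_smul, norm_smul, norm_eq_of_mem_sphere, mul_one, Real.norm_eq_abs,
            Real.norm_of_nonneg hq0.le]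
      _ ≤ dist θ φ + 2 * dist θ φ := by
          gcongr
          · exact abs_sub_le_iff.2 ⟨by linarith [hr.2, hq.1], by linarith [hr.1, hq.2]⟩
          · linarith [hq.2]
      _ = 3 * dist θ φ := by ring
  have hν : ENNReal.ofReal ((1 / 2) ^ (Module.finrank ℝ E - 1) * (b - a)) ≤
      radialMeasure (Module.finrank ℝ E - 1) (Ico a b) :=
    (ENNReal.ofReal_le_ofReal (by gcongr)).trans (le_radialMeasure_Ico _ (by linarith))
  calc _ ≤ ∫⁻ _ in Ico a b, ∫⁻ _ in Ico a b, ENNReal.ofReal ((3 * dist θ φ) ^ p)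
        ∂radialMeasure (Module.finrank ℝ E - 1) ∂radialMeasure (Module.finrank ℝ E - 1) := by
        rw [setLIntegral_const, setLIntegral_const, ENNReal.ofReal_mul (by positivity), sq,
          ENNReal.ofReal_mul (by have := sub_nonneg.2 hab; positivity), mul_assoc]
        gcongr
    _ ≤ _ := setLIntegral_mono' measurableSet_Ico fun r hr ↦
        setLIntegral_mono' measurableSet_Ico fun q hq ↦ ENNReal.ofReal_le_ofReal (hker hr hq)

end PowerEnergy

theorem sub_le_pow_sub_pow {n : ℕ} (hn : n ≠ 0) {a b : ℝ} (hb : 0 ≤ b) (hba : b ≤ a)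
    (hbn : 1 / 2 ≤ b ^ n) : a - b ≤ a ^ n - b ^ n := by
  obtain _ | _ | m := n
  · exact absurd rfl hn
  · simp
  have hpow (k : ℕ) : b ^ k ≤ a ^ k := pow_le_pow_left₀ hb hba k
  have hb1 : 1 / 2 ≤ b ^ (m + 1) := by
    rcases le_total b 1 with h | h
    · exact hbn.trans (pow_le_pow_of_le_one hb h (Nat.le_succ _))
    · linarith [one_le_pow₀ (n := m + 1) h]
  calc a - b ≤ 2 * b ^ (m + 1) * (a - b) :=
        le_mul_of_one_le_left (sub_nonneg.2 hba) (by linarith)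
    _ = b ^ (m + 1) * (a - b) + b * (b ^ m * (a - b)) := by ring
    _ ≤ a ^ (m + 1) * (a - b) + b * (a ^ (m + 1) - b ^ (m + 1)) := by
        have : 0 ≤ a - b := sub_nonneg.2 hba
        gcongr ?_ * _ + _ * ?_
        · exact hpow _
        rw [pow_succ, pow_succ]
        nlinarith [mul_le_mul_of_nonneg_right (hpow m) (hb.trans hba)]
    _ = a ^ (m + 2) - b ^ (m + 2) := by ring

namespace IsOddProfile

variable {E : Type*} [NormedAddCommGroup E] [NormedSpace ℝ E] [FiniteDimensional ℝ E]
  [Nontrivial E] {δ L : ℝ} {g : sphere (0 : E) 1 → ℝ}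

theorem abs_radialFun_sub_le (hg : IsOddProfile δ L g) (θ φ : sphere (0 : E) 1) :
    |radialFun g θ - radialFun g φ| ≤ |g θ - g φ| := by
  wlog h : radialFun g φ ≤ radialFun g θ generalizing θ φ
  · rw [abs_sub_comm, abs_sub_comm (g θ)]
    exact this φ θ (le_of_not_ge h)
  calc |radialFun g θ - radialFun g φ|
      ≤ radialFun g θ ^ Module.finrank ℝ E - radialFun g φ ^ Module.finrank ℝ E := by
        rw [abs_of_nonneg (sub_nonneg.2 h)]
        refine sub_le_pow_sub_pow Module.finrank_pos.ne' (hg.radialFun_pos φ).le h ?_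
        rw [hg.radialFun_pow_finrank]
        exact hg.half_le_one_add φ
    _ = g θ - g φ := by
        rw [hg.radialFun_pow_finrank, hg.radialFun_pow_finrank, add_sub_add_left_eq_sub]
    _ ≤ |g θ - g φ| := le_abs_self _

theorem abs_sub_le_mul_abs_radialFun_sub (hg : IsOddProfile δ L g) (θ φ : sphere (0 : E) 1) :
    |g θ - g φ| ≤ Module.finrank ℝ E * 2 ^ (Module.finrank ℝ E - 1) *
      |radialFun g θ - radialFun g φ| := by
  calc |g θ - g φ| = |radialFun g θ ^ Module.finrank ℝ E - radialFun g φ ^ Module.finrank ℝ E| := by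
        rw [hg.radialFun_pow_finrank, hg.radialFun_pow_finrank, add_sub_add_left_eq_sub]
    _ ≤ _ := abs_pow_sub_pow_le _ _ _
    _ ≤ |radialFun g θ - radialFun g φ| * Module.finrank ℝ E * 2 ^ (Module.finrank ℝ E - 1) := by
        have hmax := (hg.radialFun_pos θ).le.trans (le_max_left _ (radialFun g φ))
        rw [abs_of_pos (hg.radialFun_pos θ), abs_of_pos (hg.radialFun_pos φ)]
        gcongr
        exact max_le ((hg.radialFun_le θ).trans (by norm_num))
          ((hg.radialFun_le φ).trans (by norm_num))
    _ = _ := by ring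

end IsOddProfile

section RieszEstimate

variable {E : Type*} [NormedAddCommGroup E]

theorem exists_mul_sq_sub_le_rayInteraction [NormedSpace ℝ E] [FiniteDimensional ℝ E] [Nontrivial E]
    {p : ℝ} (hp : p ≤ 0) :
    ∃ c : ℝ, 0 < c ∧ ∀ {δ L : ℝ} {g : sphere (0 : E) 1 → ℝ}, IsOddProfile δ L g → ∀ θ φ,
      ENNReal.ofReal (c * ((g θ - g φ) ^ 2 * dist θ φ ^ p)) ≤
        rayInteraction p θ φ
          (Ico (min (radialFun g θ) (radialFun g φ)) (max (radialFun g θ) (radialFun g φ)))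
          (Ico (min (radialFun g θ) (radialFun g φ)) (max (radialFun g θ) (radialFun g φ))) := by
  have hn : (0 : ℝ) < Module.finrank ℝ E := by exact_mod_cast Module.finrank_pos
  set d := Module.finrank ℝ E - 1 with hd
  refine ⟨3 ^ p * ((1 / 2) ^ d / (Module.finrank ℝ E * 2 ^ d)) ^ 2, by positivity, ?_⟩
  intro δ L g hg θ φ
  have hlen := max_sub_min_eq_abs' (radialFun g θ) (radialFun g φ)
  have hdist : |radialFun g θ - radialFun g φ| ≤ dist θ φ :=
    calc _ ≤ |g θ - g φ| := hg.abs_radialFun_sub_le θ φ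
      _ ≤ L * dist θ φ := hg.abs_sub_le θ φ
      _ ≤ dist θ φ := mul_le_of_le_one_left dist_nonneg hg.le_one
  refine le_trans (ENNReal.ofReal_le_ofReal ?_) (le_rayInteraction_Ico hp
    (le_min (hg.half_le_radialFun θ) (hg.half_le_radialFun φ)) min_le_max
    (max_le (hg.radialFun_le θ) (hg.radialFun_le φ)) (hlen.trans_le hdist))
  have hsq : (g θ - g φ) ^ 2 ≤
      (Module.finrank ℝ E * 2 ^ d * |radialFun g θ - radialFun g φ|) ^ 2 :=
    sq_le_sq' (abs_le.1 (hg.abs_sub_le_mul_abs_radialFun_sub θ φ)).1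
      ((le_abs_self _).trans (hg.abs_sub_le_mul_abs_radialFun_sub θ φ))
  rw [hlen, Real.mul_rpow (by norm_num) dist_nonneg]
  calc _ ≤ 3 ^ p * ((1 / 2) ^ d / (Module.finrank ℝ E * 2 ^ d)) ^ 2 *
        ((Module.finrank ℝ E * 2 ^ d * |radialFun g θ - radialFun g φ|) ^ 2 * dist θ φ ^ p) := by
        gcongr
    _ = _ := by rw [hd]; field_simp

theorem two_mul_lintegral_lintegral_add_le {X : Type*} [MeasurableSpace X] {σ : Measure X}
    [SFinite σ] {f j q : X → X → ℝ≥0∞} (hf : Measurable (Function.uncurry f))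
    (hq : Measurable (Function.uncurry q)) (h : ∀ x y, 2 * f x y + j x y ≤ q x y + q y x) :
    2 * ∫⁻ x, ∫⁻ y, f x y ∂σ ∂σ + ∫⁻ x, ∫⁻ y, j x y ∂σ ∂σ ≤ 2 * ∫⁻ x, ∫⁻ y, q x y ∂σ ∂σ := by
  have hf2 : Measurable (Function.uncurry fun x y ↦ 2 * f x y) := hf.const_mul 2
  have hadd (u : X → X → ℝ≥0∞) {v : X → X → ℝ≥0∞} (hv : Measurable (Function.uncurry v)) :
      ∫⁻ x, ∫⁻ y, v x y ∂σ ∂σ + ∫⁻ x, ∫⁻ y, u x y ∂σ ∂σ =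
        ∫⁻ x, ∫⁻ y, (v x y + u x y) ∂σ ∂σ := by
    have hv' : Measurable fun x ↦ ∫⁻ y, v x y ∂σ := hv.lintegral_prod_right'
    rw [← lintegral_add_left hv']
    exact lintegral_congr fun x ↦ (lintegral_add_left (hv.comp measurable_prodMk_left) _).symm
  calc _ = ∫⁻ x, ∫⁻ y, (2 * f x y + j x y) ∂σ ∂σ := by
        rw [← hadd _ hf2]
        simp only [lintegral_const_mul' _ _ ofNat_ne_top]
    _ ≤ ∫⁻ x, ∫⁻ y, (q x y + q y x) ∂σ ∂σ :=
        lintegral_mono fun x ↦ lintegral_mono fun y ↦ h x y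
    _ = _ := by
        rw [← hadd _ hq, two_mul, lintegral_lintegral_swap (f := q) hq.aemeasurable]

variable [InnerProductSpace ℝ E] [FiniteDimensional ℝ E] [MeasurableSpace E] [BorelSpace E]
  [Nontrivial E] (μ : Measure E) [μ.IsAddHaarMeasure] {p : ℝ}

theorem lintegral_rayInteraction_self_le (hp : -(Module.finrank ℝ E : ℝ) ≤ p) (hp0 : p ≤ 0)
    {δ L : ℝ} {g : sphere (0 : E) 1 → ℝ} (hg : IsOddProfile δ L g) :
    ∫⁻ θ, ∫⁻ φ, rayInteraction p θ φ (Iio (radialFun g θ)) (Iio (radialFun g θ))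
        ∂μ.toSphere ∂μ.toSphere ≤
      ENNReal.ofReal (1 + δ ^ 2) * powerEnergy μ p (ball 0 1) := by
  have hn : (0 : ℝ) < Module.finrank ℝ E := by exact_mod_cast Module.finrank_pos
  have hmeas : Measurable fun z : sphere (0 : E) 1 × sphere (0 : E) 1 ↦
      rayInteraction p z.1 z.2 (Iio 1) (Iio 1) :=
    measurable_rayInteraction_Iio measurable_fst measurable_snd measurable_const measurable_const
  have hscale (θ φ : sphere (0 : E) 1) := rayInteraction_Iio_self (p := p) θ φ (hg.radialFun_pos θ)
  simp only [hscale, hg.radialFun_rpow, lintegral_const_mul' _ _ ofReal_ne_top]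
  rw [← starBody_const, powerEnergy_starBody μ p measurable_const]
  have hexp : 0 ≤ (Module.finrank ℝ E + p) / Module.finrank ℝ E ∧
      (Module.finrank ℝ E + p) / Module.finrank ℝ E ≤ 1 :=
    ⟨div_nonneg (by linarith) hn.le, (div_le_one hn).2 (by linarith)⟩
  refine hg.lintegral_rpow_mul_le (measurePreserving_neg_sphere μ) (by linarith) (by linarith)
    hmeas.lintegral_prod_right' fun θ ↦ ?_
  rw [← (measurePreserving_neg_sphere μ).lintegral_comp (measurable_rayInteraction_Iio
    measurable_const measurable_id' measurable_const measurable_const)]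
  simp only [rayInteraction_neg_neg]

theorem exists_two_mul_powerEnergy_starBody_add_le (hp : -(Module.finrank ℝ E : ℝ) ≤ p)
    (hp0 : p ≤ 0) :
    ∃ c : ℝ, 0 < c ∧ ∀ {δ L : ℝ} {g : sphere (0 : E) 1 → ℝ}, IsOddProfile δ L g →
      2 * powerEnergy μ p (starBody (radialFun g)) + ENNReal.ofReal c * gagliardoEnergy μ p g ≤
        2 * (ENNReal.ofReal (1 + δ ^ 2) * powerEnergy μ p (ball 0 1)) := by
  obtain ⟨c, hc, hlower⟩ := exists_mul_sq_sub_le_rayInteraction (E := E) hp0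
  refine ⟨c, hc, fun {δ L g} hg ↦ ?_⟩
  have hρ := hg.continuous_radialFun.measurable
  rw [powerEnergy_starBody μ p hρ, gagliardoEnergy]
  simp only [← lintegral_const_mul' _ _ ofReal_ne_top, ← ENNReal.ofReal_mul hc.le]
  refine (two_mul_lintegral_lintegral_add_le
    (measurable_rayInteraction_Iio measurable_fst measurable_snd (hρ.comp measurable_fst)
      (hρ.comp measurable_snd))
    (measurable_rayInteraction_Iio measurable_fst measurable_snd (hρ.comp measurable_fst)
      (hρ.comp measurable_fst)) fun θ φ ↦ ?_).trans
    (mul_le_mul_right (lintegral_rayInteraction_self_le μ hp hp0 hg) 2)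
  rw [rayInteraction_comm φ θ, rayInteraction_Iio_add_rayInteraction_Iio]
  gcongr
  exact hlower hg θ φ

end RieszEstimate

/-! ### The perimeter of a perturbed ball -/

theorem hausdorffMeasure_range_le {X Y : Type*} [MetricSpace X] [MeasurableSpace X]
    [BorelSpace X] [MetricSpace Y] [MeasurableSpace Y] [BorelSpace Y] {f : X → Y} {u : X → ℝ}
    (hu : Measurable u) (hu0 : ∀ x, 0 ≤ u x)
    (hf : ∀ x y, dist (f x) (f y) ≤ max (u x) (u y) * dist x y) {d η : ℝ} (hd : 0 ≤ d)
    (hη : 0 < η) :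
    μH[d] (Set.range f) ≤ ∫⁻ x, ENNReal.ofReal (u x + η) ^ d ∂μH[d] := by
  -- On each slice of `X` where `u` varies by at most `η`, `f` is Lipschitz with constant `≤ u + η`.
  set S : ℕ → Set X := fun j ↦ {x | ⌊u x / η⌋₊ = j}
  have hSm (j) : MeasurableSet (S j) := (hu.div_const η).nat_floor (measurableSet_singleton j)
  have hSu : ⋃ j, S j = Set.univ := Set.iUnion_eq_univ_iff.2 fun x ↦ ⟨_, rfl⟩
  have hSd : Pairwise (Function.onFun Disjoint S) := fun i j hij ↦
    Set.disjoint_left.2 fun x hx hy ↦ hij (hx.symm.trans hy)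
  have hslice (j) : μH[d] (f '' S j) ≤ ∫⁻ x in S j, ENNReal.ofReal (u x + η) ^ d ∂μH[d] := by
    have hle {x} (hx : x ∈ S j) : u x ≤ (j + 1) * η :=
      ((div_lt_iff₀ hη).1 (hx ▸ Nat.lt_floor_add_one (u x / η))).le
    have hge {x} (hx : x ∈ S j) : j * η ≤ u x :=
      (le_div_iff₀ hη).1 (hx ▸ Nat.floor_le (div_nonneg (hu0 x) hη.le))
    have hlip : LipschitzOnWith ((j + 1) * η).toNNReal f (S j) :=
      LipschitzOnWith.of_dist_le_mul fun x hx y hy ↦ by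
        rw [Real.coe_toNNReal _ (by positivity)]
        exact (hf x y).trans (by gcongr; exact max_le (hle hx) (hle hy))
    refine (hlip.hausdorffMeasure_image_le hd).trans ?_
    rw [← setLIntegral_const]
    refine setLIntegral_mono' (hSm j) fun x hx ↦ ?_
    gcongr
    exact ENNReal.ofReal_le_ofReal (by linarith [hge hx])
  rw [← Set.image_univ, ← hSu, Set.image_iUnion, ← setLIntegral_univ, ← hSu,
    lintegral_iUnion hSm hSd]
  exact (measure_iUnion_le _).trans (ENNReal.tsum_le_tsum hslice)

theorem add_pow_le_pow_add_mul {a t : ℝ} (ha : 0 ≤ a) (ht : 0 ≤ t) (h : a + t ≤ 3) (d : ℕ) :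
    (a + t) ^ d ≤ a ^ d + d * 3 ^ d * t := by
  have hdiff := (le_abs_self _).trans (abs_pow_sub_pow_le (a + t) a d)
  rw [add_sub_cancel_left, abs_of_nonneg ht, abs_of_nonneg ha, abs_of_nonneg (by positivity),
    max_eq_left (by linarith)] at hdiff
  have hpow : (a + t) ^ (d - 1) ≤ 3 ^ d :=
    (pow_le_pow_left₀ (by positivity) h _).trans
      (pow_le_pow_right₀ (by norm_num) (Nat.sub_le d 1))
  have : t * d * (a + t) ^ (d - 1) ≤ t * d * 3 ^ d := by gcongr
  linarith

theorem measurePreserving_neg_sphere_hausdorff {E : Type*} [NormedAddCommGroup E]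
    [MeasurableSpace E] [BorelSpace E] (d : ℝ) :
    MeasurePreserving (fun θ : sphere (0 : E) 1 ↦ -θ) μH[d] μH[d] :=
  (IsometryEquiv.mk' (fun θ : sphere (0 : E) 1 ↦ -θ) (fun θ ↦ -θ) neg_neg
    (.of_dist_eq fun θ φ ↦ by simp [Subtype.dist_eq])).measurePreserving_hausdorffMeasure d

section Perimeter

variable {E : Type*} [NormedAddCommGroup E] [InnerProductSpace ℝ E]

theorem dist_smul_sphere_le {ρ : sphere (0 : E) 1 → ℝ} {L : ℝ} (hρ : ∀ θ, 1 / 2 ≤ ρ θ)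
    (hL : ∀ θ φ, |ρ θ - ρ φ| ≤ L * dist θ φ) (θ φ : sphere (0 : E) 1) :
    dist (ρ θ • (θ : E)) (ρ φ • (φ : E)) ≤
      max (ρ θ + L ^ 2) (ρ φ + L ^ 2) * dist θ φ := by
  have hM := (hρ θ).trans (le_max_left (ρ θ) (ρ φ))
  have hprod : ρ θ * ρ φ ≤ max (ρ θ) (ρ φ) ^ 2 := by
    nlinarith [hρ θ, hρ φ, le_max_left (ρ θ) (ρ φ), le_max_right (ρ θ) (ρ φ)]
  have hdiff : (ρ θ - ρ φ) ^ 2 ≤ L ^ 2 * dist θ φ ^ 2 := by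
    rw [← mul_pow]
    exact sq_le_sq' (by linarith [(abs_le.1 (hL θ φ)).1]) (abs_le.1 (hL θ φ)).2
  rw [dist_eq_norm, max_add_add_right,
    ← sq_le_sq₀ (norm_nonneg _) (mul_nonneg (by positivity) dist_nonneg), norm_smul_sub_smul_sq]
  calc (ρ θ - ρ φ) ^ 2 + ρ θ * ρ φ * dist θ φ ^ 2
      ≤ L ^ 2 * dist θ φ ^ 2 + max (ρ θ) (ρ φ) ^ 2 * dist θ φ ^ 2 := by gcongr
    _ = (L ^ 2 + max (ρ θ) (ρ φ) ^ 2) * dist θ φ ^ 2 := by ring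
    _ ≤ (max (ρ θ) (ρ φ) + L ^ 2) ^ 2 * dist θ φ ^ 2 := by
        gcongr
        nlinarith [sq_nonneg L, sq_nonneg (L ^ 2)]
    _ = _ := by ring

namespace IsOddProfile

variable {δ L : ℝ} {g : sphere (0 : E) 1 → ℝ}

theorem ofReal_radialFun_add_rpow_le (hg : IsOddProfile δ L g) {t : ℝ} (ht : 0 ≤ t)
    (ht' : t ≤ 3 / 2) (d : ℕ) (θ : sphere (0 : E) 1) :
    ENNReal.ofReal (radialFun g θ + t) ^ (d : ℝ) ≤
      ENNReal.ofReal ((1 + g θ) ^ ((d : ℝ) / Module.finrank ℝ E)) +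
        ENNReal.ofReal (d * 3 ^ d * t) := by
  have hexp : radialFun g θ ^ d = (1 + g θ) ^ ((d : ℝ) / Module.finrank ℝ E) := by
    rw [← Real.rpow_natCast, radialFun, ← Real.rpow_mul (hg.one_add_pos θ).le,
      one_div_mul_eq_div]
  have hpos := hg.radialFun_pos θ
  rw [ENNReal.rpow_natCast, ← ENNReal.ofReal_pow (by positivity), ← hexp,
    ← ENNReal.ofReal_add (by positivity) (by positivity)]
  exact ENNReal.ofReal_le_ofReal
    (add_pow_le_pow_add_mul hpos.le ht (by linarith [hg.radialFun_le θ]) d)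

variable [Nontrivial E]

theorem lipschitz_nonneg (hg : IsOddProfile δ L g) : 0 ≤ L := by
  obtain ⟨θ, -⟩ := exists_smul_sphere_eq (0 : E)
  refine nonneg_of_mul_nonneg_left ((abs_nonneg _).trans (hg.abs_sub_le θ (-θ))) ?_
  exact dist_pos.2 (ne_neg_of_mem_unit_sphere ℝ θ)

variable [MeasurableSpace E] [BorelSpace E] [FiniteDimensional ℝ E]

theorem hausdorffMeasure_frontier_starBody_le (hg : IsOddProfile δ L g) (hδ : 0 < δ) {d : ℕ}
    (hd : d ≤ Module.finrank ℝ E) :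
    μH[d] (frontier (starBody (radialFun g))) ≤
      ENNReal.ofReal (1 + (d * 3 ^ d + 1) * (δ ^ 2 + L ^ 2)) * μH[d] (sphere (0 : E) 1) := by
  have hn : (0 : ℝ) < Module.finrank ℝ E := by exact_mod_cast Module.finrank_pos
  have hdn : (d : ℝ) / Module.finrank ℝ E ≤ 1 := (div_le_one hn).2 (by exact_mod_cast hd)
  have hρ := hg.continuous_radialFun
  set t := δ ^ 2 + L ^ 2 with ht
  have ht3 : t ≤ 3 / 2 := by nlinarith [hg.le_half, hg.le_one, hg.lipschitz_nonneg]
  have hlip (θ φ) : |radialFun g θ - radialFun g φ| ≤ L * dist θ φ :=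
    (hg.abs_radialFun_sub_le θ φ).trans (hg.abs_sub_le θ φ)
  have huniv : μH[d] (Set.univ : Set (sphere (0 : E) 1)) = μH[d] (sphere (0 : E) 1) := by
    rw [← isometry_subtype_coe.hausdorffMeasure_image (.inl d.cast_nonneg), Set.image_univ,
      Subtype.range_coe]
  calc μH[d] (frontier (starBody (radialFun g)))
      ≤ μH[d] (Set.range fun θ ↦ radialFun g θ • (θ : E)) :=
        measure_mono (frontier_starBody_subset hρ one_half_pos hg.half_le_radialFun)
    _ ≤ ∫⁻ θ, ENNReal.ofReal (radialFun g θ + L ^ 2 + δ ^ 2) ^ (d : ℝ) ∂μH[d] :=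
        hausdorffMeasure_range_le (by fun_prop)
          (fun θ ↦ add_nonneg (hg.radialFun_pos θ).le (sq_nonneg L))
          (dist_smul_sphere_le hg.half_le_radialFun hlip) d.cast_nonneg (by positivity)
    _ ≤ ENNReal.ofReal (1 + δ ^ 2) * μH[d] (sphere (0 : E) 1) +
          ENNReal.ofReal (d * 3 ^ d * t) * μH[d] (sphere (0 : E) 1) := by
        simp only [add_assoc, add_comm (L ^ 2), ← ht]
        refine (lintegral_mono (hg.ofReal_radialFun_add_rpow_le (by positivity) ht3 d)).trans ?_
        rw [lintegral_add_right _ measurable_const, lintegral_const, huniv]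
        gcongr
        simpa [huniv] using hg.lintegral_rpow_mul_le (measurePreserving_neg_sphere_hausdorff d)
          (by positivity) (hdn.trans one_le_two) measurable_const (fun _ ↦ rfl) (h := 1)
    _ ≤ ENNReal.ofReal (1 + (d * 3 ^ d + 1) * t) * μH[d] (sphere (0 : E) 1) := by
        rw [← add_mul, ← ENNReal.ofReal_add (by positivity) (by positivity)]
        gcongr ENNReal.ofReal ?_ * _
        linarith [sq_nonneg L]

end IsOddProfile

end Perimeter

theorem hausdorffMeasure_sphere_lt_top {E : Type*} [NormedAddCommGroup E] [InnerProductSpace ℝ E]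
    [FiniteDimensional ℝ E] [MeasurableSpace E] [BorelSpace E] {d : ℕ}
    (hd : Module.finrank ℝ E = d + 1) : μH[d] (sphere (0 : E) 1) < ⊤ := by
  have : Fact (Module.finrank ℝ E = d + 1) := ⟨hd⟩
  suffices h : μH[d] (Set.univ : Set (sphere (0 : E) 1)) < ⊤ by
    rwa [← isometry_subtype_coe.hausdorffMeasure_image (.inl d.cast_nonneg), Set.image_univ,
      Subtype.range_coe] at h
  refine isCompact_univ.measure_lt_top_of_nhdsWithin fun x _ ↦ ?_
  have hx : ‖((-x : sphere (0 : E) 1) : E)‖ = 1 := norm_eq_of_mem_sphere (-x)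
  have hfin : Module.finrank ℝ (ℝ ∙ ((-x : sphere (0 : E) 1) : E))ᗮ = d :=
    Submodule.finrank_orthogonal_span_singleton (ne_zero_of_mem_unit_sphere (-x))
  have hball := isCompact_closedBall (0 : (ℝ ∙ ((-x : sphere (0 : E) 1) : E))ᗮ) 1
  obtain ⟨K, hK⟩ := (((contDiff_stereoInvFunAux (m := 1)).comp
    (Submodule.subtypeL _).contDiff).locallyLipschitz.locallyLipschitzOn
      (s := closedBall _ 1)).exists_lipschitzOnWith_of_compact hball
  have hlip : LipschitzOnWith K (stereographic hx).symm (closedBall 0 1) := hK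
  refine ⟨(stereographic hx).symm '' closedBall 0 1, ?_, ?_⟩
  · have hsource : x ∈ (stereographic hx).source := ne_neg_of_mem_unit_sphere ℝ x
    rw [nhdsWithin_univ, ← (stereographic hx).symm_map_nhds_eq hsource, stereographic_neg_apply]
    exact image_mem_map (closedBall_mem_nhds _ one_pos)
  · refine (hlip.hausdorffMeasure_image_le d.cast_nonneg).trans_lt
      (mul_lt_top (by finiteness) ?_)
    rw [← hfin]
    exact hball.measure_lt_top

section EssBoundary

variable {n : ℕ} {E : Set (EuclideanSpace ℝ (Fin n))} {x : EuclideanSpace ℝ (Fin n)}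

theorem hasDensity_one_of_mem_nhds (h : E ∈ 𝓝 x) : HasDensity E x 1 := by
  obtain ⟨ε, hε, hsub⟩ := Metric.mem_nhds_iff.1 h
  refine tendsto_const_nhds.congr' ?_
  filter_upwards [Ioo_mem_nhdsGT hε] with r hr
  rw [Set.inter_eq_right.2 ((ball_subset_ball hr.2.le).trans hsub),
    div_self (ENNReal.toReal_pos (measure_ball_pos _ _ hr.1).ne' measure_ball_lt_top.ne).ne']

theorem hasDensity_zero_of_compl_mem_nhds (h : Eᶜ ∈ 𝓝 x) : HasDensity E x 0 := by
  obtain ⟨ε, hε, hsub⟩ := Metric.mem_nhds_iff.1 h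
  refine tendsto_const_nhds.congr' ?_
  filter_upwards [Ioo_mem_nhdsGT hε] with r hr
  rw [(Set.subset_compl_iff_disjoint_left.1 ((ball_subset_ball hr.2.le).trans hsub)).inter_eq,
    measure_empty, toReal_zero, zero_div]

theorem essBoundary_subset_frontier (E : Set (EuclideanSpace ℝ (Fin n))) :
    essBoundary E ⊆ frontier E := by
  intro x hx
  by_contra hfr
  rw [← Set.mem_compl_iff, compl_frontier_eq_union_interior] at hfr
  exact hfr.elim (fun h ↦ hx.2 (hasDensity_one_of_mem_nhds (mem_interior_iff_mem_nhds.1 h)))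
    fun h ↦ hx.1 (hasDensity_zero_of_compl_mem_nhds (mem_interior_iff_mem_nhds.1 h))

theorem mem_essBoundary_of_exists_ball_subset
    (hin : ∀ᶠ r in 𝓝[>] 0, ∃ y, ball y (r / 2) ⊆ E ∩ ball x r)
    (hout : ∀ᶠ r in 𝓝[>] 0, ∃ z, ball z (r / 2) ⊆ ball x r \ E) : x ∈ essBoundary E := by
  have hball {r : ℝ} (hr : 0 < r) (y : EuclideanSpace ℝ (Fin n)) :
      volume.real (ball y (r / 2)) = (1 / 2) ^ n * volume.real (ball x r) := by
    rw [measureReal_def, measureReal_def, Measure.addHaar_ball_of_pos _ _ (half_pos hr),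
      Measure.addHaar_ball_of_pos _ _ hr, finrank_euclideanSpace_fin, toReal_mul, toReal_mul,
      toReal_ofReal (by positivity), toReal_ofReal (by positivity)]
    ring
  have hpos {r : ℝ} (hr : 0 < r) : 0 < volume.real (ball x r) :=
    ENNReal.toReal_pos (measure_ball_pos _ _ hr).ne' measure_ball_lt_top.ne
  constructor <;> intro hdens
  · have hle := ge_of_tendsto hdens (b := (1 / 2) ^ n) (by
      filter_upwards [hin, self_mem_nhdsWithin] with r ⟨y, hy⟩ hr
      rw [← measureReal_def, ← measureReal_def, le_div_iff₀ (hpos hr), ← hball hr y]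
      exact measureReal_mono hy (measure_ne_top_of_subset Set.inter_subset_right
        measure_ball_lt_top.ne))
    exact hle.not_gt (by positivity)
  · have hle := le_of_tendsto hdens (b := 1 - (1 / 2) ^ n) (by
      filter_upwards [hout, self_mem_nhdsWithin] with r ⟨z, hz⟩ hr
      rw [← measureReal_def, ← measureReal_def, div_le_iff₀ (hpos hr), sub_mul, one_mul,
        ← hball hr z, le_sub_iff_add_le, ← measureReal_union ?_ measurableSet_ball ?_ ?_]
      · exact measureReal_mono (Set.union_subset Set.inter_subset_right (hz.trans Set.sdiff_subset))
          measure_ball_lt_top.ne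
      · exact Set.disjoint_left.2 fun w hw hwz ↦ (hz hwz).2 hw.1
      · exact measure_ne_top_of_subset Set.inter_subset_right measure_ball_lt_top.ne
      · exact measure_ball_lt_top.ne)
    exact hle.not_gt (sub_lt_self 1 (by positivity))

theorem sphere_subset_essBoundary_ball {R : ℝ} (hR : 0 < R) :
    sphere (0 : EuclideanSpace ℝ (Fin n)) R ⊆ essBoundary (ball 0 R) := by
  intro x hx
  have hx : ‖x‖ = R := mem_sphere_zero_iff_norm.1 hx
  have hdist {t : ℝ} : dist ((1 + t / R) • x) x = |t| := by
    rw [add_smul, one_smul, dist_self_add_left, norm_smul, norm_div, hx, Real.norm_eq_abs,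
      Real.norm_of_nonneg hR.le, div_mul_cancel₀ _ hR.ne']
  have hnorm {t : ℝ} (ht : -R ≤ t) : dist ((1 + t / R) • x) 0 = R + t := by
    have hle : -1 ≤ t / R := (le_div_iff₀ hR).2 (by linarith)
    rw [dist_zero_right, norm_smul, hx, Real.norm_of_nonneg (by linarith)]
    field_simp
  refine mem_essBoundary_of_exists_ball_subset ?_ ?_
  · filter_upwards [Ioo_mem_nhdsGT hR] with r hr
    refine ⟨(1 + -(r / 2) / R) • x, Set.subset_inter (ball_subset_ball' ?_) (ball_subset_ball' ?_)⟩
    · rw [hnorm (by linarith [hr.1, hr.2])]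
      linarith
    · rw [hdist, abs_neg, abs_of_pos (half_pos hr.1)]
      linarith
  · filter_upwards [self_mem_nhdsWithin] with r (hr : 0 < r)
    refine ⟨(1 + r / 2 / R) • x, Set.subset_sdiff.2 ⟨ball_subset_ball' ?_, ball_disjoint_ball ?_⟩⟩
    · rw [hdist, abs_of_pos (half_pos hr)]
      linarith
    · rw [hnorm (by linarith)]
      linarith

theorem hausdorffMeasure_smul_of_pos {E : Type*} [NormedAddCommGroup E] [NormedSpace ℝ E]
    [MeasurableSpace E] [BorelSpace E] {c : ℝ} (hc : 0 < c) (d : ℕ) (s : Set E) :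
    μH[d] (c • s) = ENNReal.ofReal (c ^ d) * μH[d] s := by
  rw [Measure.hausdorffMeasure_smul₀ d.cast_nonneg hc.ne', ENNReal.smul_def, smul_eq_mul,
    NNReal.rpow_natCast, ENNReal.coe_pow, ← enorm_eq_nnnorm, Real.enorm_of_nonneg hc.le,
    ENNReal.ofReal_pow hc.le]

theorem perimeter_smul_le {d : ℕ} {c : ℝ} (hc : 0 < c)
    (E : Set (EuclideanSpace ℝ (Fin (d + 1)))) :
    perimeter (c • E) ≤ ENNReal.ofReal (c ^ d) * μH[d] (frontier E) := by
  have hfrontier : c • frontier E = frontier (c • E) :=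
    (Homeomorph.smulOfNeZero c hc.ne').image_frontier E
  rw [← hausdorffMeasure_smul_of_pos hc, hfrontier, perimeter, Nat.cast_succ,
    add_sub_cancel_right]
  exact measure_mono (essBoundary_subset_frontier _)

theorem le_perimeter_ball {d : ℕ} {R : ℝ} (hR : 0 < R) :
    ENNReal.ofReal (R ^ d) * μH[d] (sphere (0 : EuclideanSpace ℝ (Fin (d + 1))) 1) ≤
      perimeter (ball (0 : EuclideanSpace ℝ (Fin (d + 1))) R) := by
  rw [← hausdorffMeasure_smul_of_pos hR, smul_sphere' hR.ne', smul_zero, mul_one,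
    Real.norm_of_nonneg hR.le, perimeter, Nat.cast_succ, add_sub_cancel_right]
  exact measure_mono (sphere_subset_essBoundary_ball hR)

end EssBoundary

/-! ### Scaling and finiteness of the energies -/

section Scaling

theorem ofReal_norm_smul_rpow {E : Type*} [NormedAddCommGroup E] [NormedSpace ℝ E] {c : ℝ}
    (hc : 0 < c) (p : ℝ) (x : E) :
    ENNReal.ofReal (‖c • x‖ ^ p) = ENNReal.ofReal (c ^ p) * ENNReal.ofReal (‖x‖ ^ p) := by
  rw [norm_smul, Real.norm_of_nonneg hc.le, Real.mul_rpow hc.le (norm_nonneg x),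
    ENNReal.ofReal_mul (by positivity)]

variable {E : Type*} [NormedAddCommGroup E] [NormedSpace ℝ E] [FiniteDimensional ℝ E]
  [MeasurableSpace E] [BorelSpace E] (μ : Measure E) [μ.IsAddHaarMeasure]

theorem setLIntegral_smul_set {c : ℝ} (hc : 0 < c) (S : Set E) (h : E → ℝ≥0∞) :
    ∫⁻ x in c • S, h x ∂μ =
      ENNReal.ofReal (c ^ Module.finrank ℝ E) * ∫⁻ x in S, h (c • x) ∂μ := by
  have hemb := measurableEmbedding_const_smul₀ (α := E) hc.ne'
  have hmap : μ = ENNReal.ofReal (c ^ Module.finrank ℝ E) • μ.map (c • ·) := by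
    rw [Measure.map_addHaar_smul μ hc.ne', abs_of_pos (by positivity), smul_smul,
      ← ENNReal.ofReal_mul (by positivity), mul_inv_cancel₀ (by positivity), ENNReal.ofReal_one,
      one_smul]
  conv_lhs => rw [hmap]
  rw [setLIntegral_smul_measure, smul_eq_mul, hemb.restrict_map, hemb.lintegral_map,
    Set.preimage_smul₀ hc.ne', inv_smul_smul₀ hc.ne']

theorem setLIntegral_smul_set_norm_rpow {c : ℝ} (hc : 0 < c) (p : ℝ) (S : Set E) :
    ∫⁻ x in c • S, ENNReal.ofReal (‖x‖ ^ p) ∂μ =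
      ENNReal.ofReal (c ^ (Module.finrank ℝ E + p)) * ∫⁻ x in S, ENNReal.ofReal (‖x‖ ^ p) ∂μ := by
  simp only [setLIntegral_smul_set μ hc, ofReal_norm_smul_rpow hc]
  rw [lintegral_const_mul' _ _ ofReal_ne_top, ← mul_assoc, ← ENNReal.ofReal_mul (by positivity),
    Real.rpow_add hc, Real.rpow_natCast]

theorem powerEnergy_smul_set {c : ℝ} (hc : 0 < c) (p : ℝ) (S : Set E) :
    powerEnergy μ p (c • S) =
      ENNReal.ofReal (c ^ (2 * Module.finrank ℝ E + p)) * powerEnergy μ p S := by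
  simp only [powerEnergy, setLIntegral_smul_set μ hc, ← smul_sub, ofReal_norm_smul_rpow hc]
  simp_rw [lintegral_const_mul' _ _ ofReal_ne_top]
  simp only [← mul_assoc, ← ENNReal.ofReal_mul (pow_nonneg hc.le _)]
  rw [two_mul, Real.rpow_add hc, Real.rpow_add hc, Real.rpow_natCast]

variable [Nontrivial E]

theorem setLIntegral_ball_norm_rpow_lt_top {p : ℝ} (hp : -(Module.finrank ℝ E : ℝ) < p) (R : ℝ) :
    ∫⁻ x in ball 0 R, ENNReal.ofReal (‖x‖ ^ p) ∂μ < ⊤ := by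
  have hint : IntegrableOn (fun x : E ↦ ‖x‖ ^ p) (ball 0 R) μ := by
    rw [integrableOn_fun_norm_addHaar μ (f := (· ^ p))]
    rcases le_or_gt R 0 with hR | hR
    · simp [hR]
    have hrad : IntegrableOn (fun r : ℝ ↦ r ^ (Module.finrank ℝ E - 1 + p)) (Ioo 0 R) :=
      (intervalIntegral.integrableOn_Ioo_rpow_iff hR).2 (by linarith)
    refine hrad.congr_fun (fun r hr ↦ ?_) measurableSet_Ioo
    simp only [smul_eq_mul]
    rw [Real.rpow_add hr.1, ← Nat.cast_pred Module.finrank_pos, Real.rpow_natCast]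
  simpa [hasFiniteIntegral_iff_ofReal (ae_of_all _ fun x : E ↦ Real.rpow_nonneg (norm_nonneg x) p)]
    using hint.hasFiniteIntegral

theorem powerEnergy_ball_lt_top {p : ℝ} (hp : -(Module.finrank ℝ E : ℝ) < p) (R : ℝ) :
    powerEnergy μ p (ball 0 R) < ⊤ := by
  have hinner {x : E} (hx : x ∈ ball 0 R) : ∫⁻ y in ball 0 R, ENNReal.ofReal (‖x - y‖ ^ p) ∂μ ≤
      ∫⁻ z in ball 0 (R + R), ENNReal.ofReal (‖z‖ ^ p) ∂μ := by
    rw [← (Measure.measurePreserving_sub_left μ x).setLIntegral_comp_preimage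
      (s := ball 0 (R + R)) (f := fun z ↦ ENNReal.ofReal (‖z‖ ^ p)) measurableSet_ball
      (by fun_prop)]
    refine lintegral_mono_set fun y hy ↦ ?_
    rw [Set.mem_preimage, mem_ball_zero_iff]
    exact (norm_sub_le x y).trans_lt
      (add_lt_add (mem_ball_zero_iff.1 hx) (mem_ball_zero_iff.1 hy))
  calc powerEnergy μ p (ball 0 R)
      ≤ ∫⁻ _ in ball 0 R, ∫⁻ z in ball 0 (R + R), ENNReal.ofReal (‖z‖ ^ p) ∂μ ∂μ :=
        setLIntegral_mono' measurableSet_ball fun x hx ↦ hinner hx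
    _ = (∫⁻ z in ball 0 (R + R), ENNReal.ofReal (‖z‖ ^ p) ∂μ) * μ (ball 0 R) :=
        setLIntegral_const _ _
    _ < ⊤ := mul_lt_top (setLIntegral_ball_norm_rpow_lt_top μ hp _) measure_ball_lt_top

end Scaling

/-! ### Oscillating profiles -/

section SineProfile

theorem exists_quarter_le_abs_sin_add_sub_sin (t : ℝ) :
    ∃ s, 0 ≤ s ∧ s ≤ 4 ∧ 1 / 4 ≤ |Real.sin (t + s) - Real.sin t| := by
  have hπ := Real.pi_le_four
  by_cases h : 1 / 8 ≤ |Real.sin t|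
  · refine ⟨Real.pi, Real.pi_pos.le, hπ, ?_⟩
    rw [Real.sin_add_pi, ← neg_add', abs_neg, ← two_mul, abs_mul, abs_two]
    linarith
  · refine ⟨Real.pi / 2, by positivity, by linarith, ?_⟩
    rw [Real.sin_add_pi_div_two]
    by_contra! hcos
    nlinarith [Real.sin_sq_add_cos_sq t, abs_lt.1 (not_le.1 h), abs_lt.1 hcos]

theorem sq_sqrt_one_sub_sq_sub_le {s t : ℝ} (hs : |s| ≤ 3 / 4) (ht : |t| ≤ 3 / 4) :
    (√(1 - s ^ 2) - √(1 - t ^ 2)) ^ 2 ≤ 3 * (s - t) ^ 2 := by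
  have hsqrt {u : ℝ} (hu : |u| ≤ 3 / 4) : √(1 - u ^ 2) ^ 2 = 1 - u ^ 2 ∧ 3 / 5 ≤ √(1 - u ^ 2) := by
    have hu2 : u ^ 2 ≤ (3 / 4) ^ 2 := sq_le_sq' (abs_le.1 hu).1 (abs_le.1 hu).2
    exact ⟨Real.sq_sqrt (by linarith), Real.le_sqrt_of_sq_le (by linarith)⟩
  obtain ⟨hs2, hs'⟩ := hsqrt hs
  obtain ⟨ht2, ht'⟩ := hsqrt ht
  have hprod : (√(1 - s ^ 2) - √(1 - t ^ 2)) ^ 2 * (√(1 - s ^ 2) + √(1 - t ^ 2)) ^ 2 =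
      (s - t) ^ 2 * (s + t) ^ 2 := by
    rw [← mul_pow, ← mul_pow, mul_comm, ← sq_sub_sq, hs2, ht2]
    ring
  have hadd : (6 / 5) ^ 2 ≤ (√(1 - s ^ 2) + √(1 - t ^ 2)) ^ 2 := by gcongr; linarith
  have hst : (s + t) ^ 2 ≤ (3 / 2) ^ 2 :=
    sq_le_sq' (by linarith [(abs_le.1 hs).1, (abs_le.1 ht).1])
      (by linarith [(abs_le.1 hs).2, (abs_le.1 ht).2])
  nlinarith [mul_le_mul_of_nonneg_left hadd (sq_nonneg (√(1 - s ^ 2) - √(1 - t ^ 2))),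
    mul_le_mul_of_nonneg_left hst (sq_nonneg (s - t)), sq_nonneg (s - t)]

variable {E : Type*} [NormedAddCommGroup E] [InnerProductSpace ℝ E] {e : E}

theorem exists_norm_eq_one_inner_eq_zero (hdim : 2 ≤ Module.finrank ℝ E)
    (he : e ≠ 0) : ∃ f : E, ‖f‖ = 1 ∧ inner ℝ e f = 0 := by
  obtain ⟨d, hd⟩ := Nat.exists_eq_add_of_le' hdim
  have : Fact (Module.finrank ℝ E = (d + 1) + 1) := ⟨hd⟩
  have horth : Module.finrank ℝ (ℝ ∙ e)ᗮ = d + 1 :=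
    Submodule.finrank_orthogonal_span_singleton (𝕜 := ℝ) he
  have : Nontrivial (ℝ ∙ e)ᗮ := Module.nontrivial_of_finrank_pos (R := ℝ) (by omega)
  obtain ⟨f, hf⟩ := exists_norm_eq (ℝ ∙ e)ᗮ zero_le_one
  exact ⟨f, hf, Submodule.mem_orthogonal_singleton_iff_inner_right.1 f.2⟩

theorem norm_smul_add_smul_sq_of_orthonormal {f : E} (he : ‖e‖ = 1) (hf : ‖f‖ = 1)
    (hef : inner ℝ e f = 0) (a b : ℝ) : ‖a • e + b • f‖ ^ 2 = a ^ 2 + b ^ 2 := by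
  have hab : inner ℝ (a • e) (b • f) = 0 := by simp [inner_smul_left, inner_smul_right, hef]
  rw [sq, norm_add_sq_eq_norm_sq_add_norm_sq_real hab, norm_smul, norm_smul, he, hf, mul_one,
    mul_one, ← sq, ← sq, Real.norm_eq_abs, Real.norm_eq_abs, sq_abs, sq_abs]

theorem exists_eq_inner_smul_add_sqrt_smul (he : ‖e‖ = 1) {θ : E} (hθ : ‖θ‖ = 1)
    (ht : |inner ℝ e θ| < 1) : ∃ f : E, ‖f‖ = 1 ∧ inner ℝ e f = 0 ∧
      θ = inner ℝ e θ • e + √(1 - inner ℝ e θ ^ 2) • f := by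
  set t := inner ℝ e θ
  set w := θ - t • e with hw
  have hew : inner ℝ e w = 0 := by
    rw [inner_sub_right, inner_smul_right, real_inner_self_eq_norm_sq, he]
    simp [t]
  have hnorm : ‖w‖ = √(1 - t ^ 2) := by
    rw [← Real.sqrt_sq (norm_nonneg w), norm_sub_sq_real, inner_smul_right, real_inner_comm,
      norm_smul, hθ, he, Real.norm_eq_abs, mul_one, sq_abs]
    congr 1
    ring
  have hpos : 0 < √(1 - t ^ 2) := Real.sqrt_pos.2 (by rwa [sub_pos, sq_lt_one_iff_abs_lt_one])
  refine ⟨(√(1 - t ^ 2))⁻¹ • w, ?_, by rw [inner_smul_right, hew, mul_zero], ?_⟩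
  · rw [norm_smul, norm_inv, Real.norm_of_nonneg hpos.le, hnorm, inv_mul_cancel₀ hpos.ne']
  · rw [smul_inv_smul₀ hpos.ne', hw, add_sub_cancel]

theorem exists_inner_eq_and_dist_le (he : ‖e‖ = 1) (θ : sphere (0 : E) 1) {s : ℝ}
    (ht : |inner ℝ e (θ : E)| ≤ 3 / 4) (hs : |s| ≤ 3 / 4) : ∃ φ : sphere (0 : E) 1,
      inner ℝ e (φ : E) = s ∧ dist θ φ ≤ 2 * |inner ℝ e (θ : E) - s| := by
  set t := inner ℝ e (θ : E)
  obtain ⟨f, hf, hef, hθ⟩ := exists_eq_inner_smul_add_sqrt_smul he (norm_eq_of_mem_sphere θ)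
    (ht.trans_lt (by norm_num))
  have hnorm := norm_smul_add_smul_sq_of_orthonormal he hf hef
  have hs2 : s ^ 2 ≤ 1 := by rw [sq_le_one_iff_abs_le_one]; linarith
  have hφ : ‖s • e + √(1 - s ^ 2) • f‖ = 1 := by
    rw [← sq_eq_sq₀ (norm_nonneg _) zero_le_one, hnorm, Real.sq_sqrt (by linarith)]
    ring
  refine ⟨⟨_, mem_sphere_zero_iff_norm.2 hφ⟩, ?_, ?_⟩
  · rw [inner_add_right, inner_smul_right, inner_smul_right, hef, real_inner_self_eq_norm_sq, he]
    ring
  · have hsub : (θ : E) - (s • e + √(1 - s ^ 2) • f) =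
        (t - s) • e + (√(1 - t ^ 2) - √(1 - s ^ 2)) • f := by
      rw [hθ]
      module
    rw [Subtype.dist_eq, dist_eq_norm, hsub,
      ← sq_le_sq₀ (norm_nonneg _) (by positivity), hnorm, mul_pow, sq_abs]
    linarith [sq_sqrt_one_sub_sq_sub_le ht hs]

/-- The ridge profile on the sphere that oscillates in the direction `e` with amplitude `δ` and
frequency `k`. -/
def sineProfile (e : E) (δ k : ℝ) (θ : sphere (0 : E) 1) : ℝ :=
  δ * Real.sin (k * inner ℝ e (θ : E))

variable {δ k : ℝ}

theorem abs_sineProfile_sub_le (he : ‖e‖ = 1) (hδ : 0 ≤ δ) (hk : 0 ≤ k)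
    (θ φ : sphere (0 : E) 1) :
    |sineProfile e δ k θ - sineProfile e δ k φ| ≤ δ * k * dist θ φ := by
  rw [sineProfile, sineProfile, ← mul_sub, abs_mul, abs_of_nonneg hδ, mul_assoc]
  gcongr
  calc |Real.sin (k * inner ℝ e (θ : E)) - Real.sin (k * inner ℝ e (φ : E))|
      ≤ |k * inner ℝ e (θ : E) - k * inner ℝ e (φ : E)| := by
        simpa [Real.dist_eq] using Real.lipschitzWith_sin.dist_le_mul _ _
    _ = k * |inner ℝ e ((θ : E) - φ)| := by
        rw [← mul_sub, abs_mul, abs_of_nonneg hk, inner_sub_right]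
    _ ≤ k * dist θ φ := by
        rw [Subtype.dist_eq, dist_eq_norm]
        gcongr
        simpa [he] using abs_real_inner_le_norm e ((θ : E) - φ)

theorem isOddProfile_sineProfile (he : ‖e‖ = 1) (hδ : 0 ≤ δ) (hδ' : δ ≤ 1 / 2) (hk : 0 ≤ k)
    (hδk : δ * k ≤ 1) : IsOddProfile δ (δ * k) (sineProfile e δ k) where
  map_neg θ := by simp [sineProfile]
  abs_le θ := by
    rw [sineProfile, abs_mul, abs_of_nonneg hδ]
    exact mul_le_of_le_one_right hδ (Real.abs_sin_le_one _)
  le_half := hδ'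
  abs_sub_le := abs_sineProfile_sub_le he hδ hk
  le_one := hδk

theorem exists_dist_le_and_le_abs_sineProfile_sub (he : ‖e‖ = 1) (hδ : 0 ≤ δ) (hk : 16 ≤ k)
    {θ : sphere (0 : E) 1} (hθ : |inner ℝ e (θ : E)| ≤ 1 / 2) :
    ∃ φ, dist θ φ ≤ 8 / k ∧ δ / 4 ≤ |sineProfile e δ k θ - sineProfile e δ k φ| := by
  have hk0 : 0 < k := by linarith
  obtain ⟨s, hs0, hs4, hs⟩ := exists_quarter_le_abs_sin_add_sub_sin (k * inner ℝ e (θ : E))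
  have hsk0 : 0 ≤ s / k := by positivity
  have hsk : s / k ≤ 1 / 4 := by
    rw [div_le_iff₀ hk0]
    linarith
  obtain ⟨φ, hφ, hdist⟩ := exists_inner_eq_and_dist_le he θ (s := inner ℝ e (θ : E) + s / k)
    (by linarith) (by linarith [abs_add_le (inner ℝ e (θ : E)) (s / k), abs_of_nonneg hsk0])
  refine ⟨φ, hdist.trans ?_, ?_⟩
  · rw [sub_add_cancel_left, abs_neg, abs_of_nonneg hsk0, ← mul_div_assoc]
    gcongr
    linarith
  · rw [sineProfile, sineProfile, ← mul_sub, abs_mul, abs_of_nonneg hδ, hφ, mul_add,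
      mul_div_cancel₀ _ hk0.ne', abs_sub_comm, div_eq_mul_one_div]
    gcongr

theorem mul_rpow_le_sq_sineProfile_sub_mul (he : ‖e‖ = 1) (hδ : 0 < δ) (hk : 0 < k) {p : ℝ}
    (hp : p ≤ 0) {θ φ ψ : sphere (0 : E) 1} (hφ : dist θ φ ≤ 8 / k)
    (hsin : δ / 4 ≤ |sineProfile e δ k θ - sineProfile e δ k φ|)
    (hψ : ψ ∈ ball φ (1 / (8 * k))) :
    (δ / 8) ^ 2 * (9 / k) ^ p ≤
      (sineProfile e δ k θ - sineProfile e δ k ψ) ^ 2 * dist θ ψ ^ p := by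
  have hψφ : dist φ ψ ≤ 1 / (8 * k) := (mem_ball'.1 hψ).le
  have hdiff : δ / 8 ≤ |sineProfile e δ k θ - sineProfile e δ k ψ| := by
    have hstable : |sineProfile e δ k φ - sineProfile e δ k ψ| ≤ δ / 8 :=
      calc |sineProfile e δ k φ - sineProfile e δ k ψ| ≤ δ * k * (1 / (8 * k)) :=
            (abs_sineProfile_sub_le he hδ.le hk.le φ ψ).trans (by gcongr)
        _ = δ / 8 := by field_simp
    have htri := abs_sub_le (sineProfile e δ k θ) (sineProfile e δ k ψ) (sineProfile e δ k φ)
    rw [abs_sub_comm (sineProfile e δ k ψ)] at htri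
    linarith
  have hdist : dist θ ψ ≤ 9 / k :=
    calc dist θ ψ ≤ 8 / k + 1 / (8 * k) := (dist_triangle θ φ ψ).trans (add_le_add hφ hψφ)
      _ ≤ 9 / k := by
        rw [one_div, mul_inv, ← div_eq_mul_inv, ← add_div]
        gcongr
        norm_num
  have hpos : 0 < dist θ ψ := by
    refine dist_pos.2 fun h ↦ ?_
    rw [h, sub_self, abs_zero] at hdiff
    linarith
  rw [← sq_abs (sineProfile e δ k θ - _)]
  gcongr ?_ ^ 2 * ?_
  exact Real.rpow_le_rpow_of_nonpos hpos hdist hp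

variable [FiniteDimensional ℝ E] [MeasurableSpace E] [BorelSpace E] (μ : Measure E)
  [μ.IsAddHaarMeasure]

theorem exists_le_lintegral_sq_sineProfile_sub_mul [Nontrivial E] {p : ℝ} (hp : p ≤ 0) :
    ∃ c : ℝ, 0 < c ∧ ∀ {e : E} {δ k : ℝ}, ‖e‖ = 1 → 0 < δ → 16 ≤ k →
      ∀ θ : sphere (0 : E) 1, |inner ℝ e (θ : E)| ≤ 1 / 2 →
        ENNReal.ofReal (c * δ ^ 2 * k ^ (1 - Module.finrank ℝ E - p)) ≤
          ∫⁻ φ, ENNReal.ofReal ((sineProfile e δ k θ - sineProfile e δ k φ) ^ 2 * dist θ φ ^ p)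
            ∂μ.toSphere := by
  obtain ⟨κ, hκ, hcap⟩ := exists_mul_pow_le_toSphere_ball μ
  set d := Module.finrank ℝ E - 1 with hd
  have hdim : (Module.finrank ℝ E : ℝ) = d + 1 := by
    rw [hd, Nat.cast_pred Module.finrank_pos, sub_add_cancel]
  refine ⟨(1 / 8) ^ 2 * 9 ^ p * (κ * (1 / 8) ^ d), by positivity, fun {e δ k} he hδ hk θ hθ ↦ ?_⟩
  have hk0 : 0 < k := by linarith
  obtain ⟨φ, hφ, hsin⟩ := exists_dist_le_and_le_abs_sineProfile_sub he hδ.le hk hθ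
  have hscale : (1 / 8) ^ 2 * 9 ^ p * (κ * (1 / 8) ^ d) * δ ^ 2 *
      k ^ (1 - Module.finrank ℝ E - p) =
        (δ / 8) ^ 2 * (9 / k) ^ p * (κ * (1 / (8 * k)) ^ d) := by
    rw [hdim, show (1 : ℝ) - (d + 1) - p = -p + -d by ring, Real.rpow_add hk0,
      Real.rpow_neg hk0.le, Real.rpow_neg hk0.le, Real.rpow_natCast,
      Real.div_rpow (by norm_num) hk0.le]
    field_simp
    rw [← mul_pow]
    congr 1
    field_simp
  calc ENNReal.ofReal _
      ≤ ENNReal.ofReal ((δ / 8) ^ 2 * (9 / k) ^ p) * μ.toSphere (ball φ (1 / (8 * k))) := by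
        rw [hscale, ENNReal.ofReal_mul (by positivity)]
        gcongr
        refine hcap φ _ (by positivity) ?_
        rw [div_le_iff₀ (by positivity)]
        linarith
    _ ≤ ∫⁻ ψ in ball φ (1 / (8 * k)), ENNReal.ofReal
          ((sineProfile e δ k θ - sineProfile e δ k ψ) ^ 2 * dist θ ψ ^ p) ∂μ.toSphere := by
        rw [← setLIntegral_const]
        exact setLIntegral_mono' measurableSet_ball fun ψ hψ ↦ ENNReal.ofReal_le_ofReal
          (mul_rpow_le_sq_sineProfile_sub_mul he hδ hk0 hp hφ hsin hψ)
    _ ≤ _ := setLIntegral_le_lintegral _ _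

theorem exists_le_gagliardoEnergy_sineProfile (hdim : 2 ≤ Module.finrank ℝ E) (he : ‖e‖ = 1)
    {p : ℝ} (hp : p ≤ 0) :
    ∃ c : ℝ, 0 < c ∧ ∀ {δ k : ℝ}, 0 < δ → 16 ≤ k →
      ENNReal.ofReal (c * δ ^ 2 * k ^ (1 - Module.finrank ℝ E - p)) ≤
        gagliardoEnergy μ p (sineProfile e δ k) := by
  have : Nontrivial E := Module.nontrivial_of_finrank_pos (R := ℝ) (by omega)
  obtain ⟨κ, hκ, hcap⟩ := exists_mul_pow_le_toSphere_ball μ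
  obtain ⟨c, hc, hray⟩ := exists_le_lintegral_sq_sineProfile_sub_mul μ hp
  obtain ⟨f, hf, hef⟩ := exists_norm_eq_one_inner_eq_zero hdim
    (norm_ne_zero_iff.1 (he ▸ one_ne_zero))
  refine ⟨c * (κ * (1 / 2) ^ (Module.finrank ℝ E - 1)), by positivity, fun {δ k} hδ hk ↦ ?_⟩
  have : 0 < k := by linarith
  let f' : sphere (0 : E) 1 := ⟨f, mem_sphere_zero_iff_norm.2 hf⟩
  have hinner {θ : sphere (0 : E) 1} (hθ : θ ∈ ball f' (1 / 2)) : |inner ℝ e (θ : E)| ≤ 1 / 2 := by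
    have hle := abs_real_inner_le_norm e ((θ : E) - f)
    rw [inner_sub_right, hef, sub_zero, he, one_mul, ← dist_eq_norm] at hle
    exact hle.trans (mem_ball.1 hθ).le
  calc ENNReal.ofReal _
      = ENNReal.ofReal (c * δ ^ 2 * k ^ (1 - Module.finrank ℝ E - p)) *
          ENNReal.ofReal (κ * (1 / 2) ^ (Module.finrank ℝ E - 1)) := by
        rw [← ENNReal.ofReal_mul (by positivity)]
        ring_nf
    _ ≤ ENNReal.ofReal (c * δ ^ 2 * k ^ (1 - Module.finrank ℝ E - p)) *
          μ.toSphere (ball f' (1 / 2)) := by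
        gcongr
        exact hcap f' _ (by norm_num) (by norm_num)
    _ ≤ ∫⁻ θ in ball f' (1 / 2), ∫⁻ φ, ENNReal.ofReal
          ((sineProfile e δ k θ - sineProfile e δ k φ) ^ 2 * dist θ φ ^ p)
            ∂μ.toSphere ∂μ.toSphere := by
        rw [← setLIntegral_const]
        exact setLIntegral_mono' measurableSet_ball fun θ hθ ↦ hray he hδ hk θ (hinner hθ)
    _ ≤ gagliardoEnergy μ p (sineProfile e δ k) := setLIntegral_le_lintegral _ _

end SineProfile

/-! ### The energy of a dilated perturbation -/

section Dilation

variable {E : Type*} [NormedAddCommGroup E] [InnerProductSpace ℝ E] [FiniteDimensional ℝ E]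
  [MeasurableSpace E] [BorelSpace E] (μ : Measure E) [μ.IsAddHaarMeasure]

theorem exists_two_mul_powerEnergy_starBody_sineProfile_add_le (hdim : 2 ≤ Module.finrank ℝ E)
    {e : E} (he : ‖e‖ = 1) {p : ℝ} (hp : -(Module.finrank ℝ E : ℝ) ≤ p) (hp0 : p ≤ 0) :
    ∃ c : ℝ, 0 < c ∧ ∀ {δ k : ℝ}, 0 < δ → δ ≤ 1 / 2 → 16 ≤ k → δ * k ≤ 1 →
      2 * powerEnergy μ p (starBody (radialFun (sineProfile e δ k))) +
          ENNReal.ofReal (c * δ ^ 2 * k ^ (1 - Module.finrank ℝ E - p)) ≤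
        2 * (ENNReal.ofReal (1 + δ ^ 2) * powerEnergy μ p (ball 0 1)) := by
  have : Nontrivial E := Module.nontrivial_of_finrank_pos (R := ℝ) (by omega)
  obtain ⟨c₁, hc₁, hriesz⟩ := exists_two_mul_powerEnergy_starBody_add_le μ hp hp0
  obtain ⟨c₂, hc₂, hseminorm⟩ := exists_le_gagliardoEnergy_sineProfile μ hdim he hp0
  refine ⟨c₁ * c₂, mul_pos hc₁ hc₂, fun {δ k} hδ hδ' hk hδk ↦ ?_⟩
  have hg := isOddProfile_sineProfile he hδ.le hδ' (by linarith) hδk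
  refine le_trans ?_ (hriesz hg)
  rw [mul_assoc, mul_assoc, ENNReal.ofReal_mul hc₁.le, ← mul_assoc c₂]
  gcongr
  exact hseminorm hδ hk

end Dilation

section TotalEnergy

variable {n : ℕ} {α β A R : ℝ}

theorem rieszEnergy_smul_set (hR : 0 < R) (E : Set (EuclideanSpace ℝ (Fin n))) :
    rieszEnergy α (R • E) = ENNReal.ofReal (R ^ (n + α)) * rieszEnergy α E := by
  have h := powerEnergy_smul_set volume hR (α - n) E
  rwa [finrank_euclideanSpace_fin, show 2 * (n : ℝ) + (α - n) = n + α by ring] at h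

theorem potEnergy_eq (hA : 0 ≤ A) (E : Set (EuclideanSpace ℝ (Fin n))) :
    potEnergy β A E = ENNReal.ofReal A * ∫⁻ x in E, ENNReal.ofReal (‖x‖ ^ β) := by
  simp only [potEnergy, ENNReal.ofReal_mul hA]
  exact lintegral_const_mul' _ _ ofReal_ne_top

theorem potEnergy_smul_set (hA : 0 ≤ A) (hR : 0 < R) (E : Set (EuclideanSpace ℝ (Fin n))) :
    potEnergy β A (R • E) = ENNReal.ofReal (R ^ (n + β)) * potEnergy β A E := by
  rw [potEnergy_eq hA, potEnergy_eq hA, setLIntegral_smul_set_norm_rpow volume hR,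
    finrank_euclideanSpace_fin, mul_left_comm]

variable {d : ℕ} {δ L : ℝ} {g : sphere (0 : EuclideanSpace ℝ (Fin (d + 1))) 1 → ℝ}

theorem potEnergy_ball_lt_top (hβ : -((d + 1 : ℕ) : ℝ) < β) (hA : 0 ≤ A) :
    potEnergy β A (ball (0 : EuclideanSpace ℝ (Fin (d + 1))) R) < ⊤ := by
  rw [potEnergy_eq hA]
  exact ENNReal.mul_lt_top ofReal_lt_top
    (setLIntegral_ball_norm_rpow_lt_top volume (by rwa [finrank_euclideanSpace_fin]) R)

theorem IsOddProfile.potEnergy_starBody_le (hg : IsOddProfile δ L g)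
    (hβ : -((d + 1 : ℕ) : ℝ) ≤ β) (hβd : β ≤ (d + 1 : ℕ)) (hA : 0 ≤ A) :
    potEnergy β A (starBody (radialFun g)) ≤
      ENNReal.ofReal (1 + δ ^ 2) *
        potEnergy β A (ball (0 : EuclideanSpace ℝ (Fin (d + 1))) 1) := by
  rw [potEnergy_eq hA, potEnergy_eq hA, mul_left_comm]
  gcongr
  exact hg.setLIntegral_starBody_le volume (p := β) (by fun_prop) (by simp)
    (by rwa [finrank_euclideanSpace_fin]) (by rwa [finrank_euclideanSpace_fin])
    fun c hc x ↦ ofReal_norm_smul_rpow hc β x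

theorem le_totalEnergy_ball (hA : 0 ≤ A) (hR : 0 < R) :
    ENNReal.ofReal (R ^ d) * μH[d] (sphere (0 : EuclideanSpace ℝ (Fin (d + 1))) 1) +
        ENNReal.ofReal (R ^ ((d + 1 : ℕ) + α)) *
          rieszEnergy α (ball (0 : EuclideanSpace ℝ (Fin (d + 1))) 1) +
        ENNReal.ofReal (R ^ ((d + 1 : ℕ) + β)) *
          potEnergy β A (ball (0 : EuclideanSpace ℝ (Fin (d + 1))) 1) ≤
      totalEnergy α β A (ball (0 : EuclideanSpace ℝ (Fin (d + 1))) R) := by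
  rw [← rieszEnergy_smul_set hR, ← potEnergy_smul_set hA hR, smul_unitBall_of_pos hR]
  unfold totalEnergy
  gcongr
  exact le_perimeter_ball hR

theorem IsOddProfile.totalEnergy_smul_starBody_le (hg : IsOddProfile δ L g)
    (hδ : 0 < δ) (hβ : -((d + 1 : ℕ) : ℝ) ≤ β) (hβd : β ≤ (d + 1 : ℕ)) (hA : 0 ≤ A)
    (hR : 0 < R) :
    totalEnergy α β A (R • starBody (radialFun g)) ≤
      ENNReal.ofReal (R ^ d) * (ENNReal.ofReal (1 + (d * 3 ^ d + 1) * (δ ^ 2 + L ^ 2)) *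
          μH[d] (sphere (0 : EuclideanSpace ℝ (Fin (d + 1))) 1)) +
        ENNReal.ofReal (R ^ ((d + 1 : ℕ) + α)) * rieszEnergy α (starBody (radialFun g)) +
        ENNReal.ofReal (R ^ ((d + 1 : ℕ) + β)) * (ENNReal.ofReal (1 + δ ^ 2) *
          potEnergy β A (ball (0 : EuclideanSpace ℝ (Fin (d + 1))) 1)) := by
  rw [totalEnergy, rieszEnergy_smul_set hR, potEnergy_smul_set hA hR]
  gcongr
  · refine (perimeter_smul_le hR _).trans ?_
    gcongr
    exact hg.hausdorffMeasure_frontier_starBody_le hδ (by simp)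
  · exact hg.potEnergy_starBody_le hβ hβd hA

end TotalEnergy

/-! ### Choice of the parameters -/

section Parameters

variable {α β D S V U c : ℝ}

theorem exists_forall_ge_perturbation_cost_lt (hα : -1 < α) (hα1 : α < 1) (hβ1 : β < 1)
    (hc : 0 < c) : ∃ l : ℝ, 0 < l ∧ ∃ R₀ : ℝ, 1 ≤ R₀ ∧ ∀ R, R₀ ≤ R → 16 * l ≤ R ∧
      D * (R ^ (-2 : ℝ) + l ^ (-2 : ℝ)) + V * R ^ (α - 1) + U * R ^ (β - 1) <
        c * l ^ (α - 1) := by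
  have hlim {y : ℝ} (hy : y < 0) : Tendsto (fun R : ℝ ↦ R ^ y) atTop (𝓝 0) := by
    simpa using tendsto_rpow_neg_atTop (neg_pos.2 hy)
  obtain ⟨l, hl, hl0⟩ : ∃ l : ℝ, D * l ^ (-2 : ℝ) < c * l ^ (α - 1) ∧ 0 < l := by
    have h := (hlim (y := -(1 + α)) (by linarith)).const_mul D
    rw [mul_zero] at h
    obtain ⟨l, hl, hl0⟩ := ((h.eventually_lt_const hc).and (eventually_gt_atTop 0)).exists
    refine ⟨l, ?_, hl0⟩
    rw [show (-2 : ℝ) = -(1 + α) + (α - 1) by ring, Real.rpow_add hl0, ← mul_assoc]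
    gcongr
  have hsum := ((((hlim (y := -2) (by norm_num)).add_const (l ^ (-2 : ℝ))).const_mul D).add
    ((hlim (sub_neg.2 hα1)).const_mul V)).add ((hlim (sub_neg.2 hβ1)).const_mul U)
  obtain ⟨R₀, hR₀⟩ := eventually_atTop.1 <|
    (hsum.eventually_lt_const (by simpa using hl)).and (eventually_ge_atTop (16 * l))
  exact ⟨l, hl0, max R₀ 1, le_max_right _ _, fun R hR ↦
    (hR₀ R ((le_max_left _ _).trans hR)).symm⟩

theorem rescaled_energy_add_lt {d : ℕ} {l R δ W : ℝ} (hl : 0 < l) (hR : 0 < R) (hδ : 0 < δ)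
    (hW : 2 * W + c * δ ^ 2 * (R / l) ^ (1 - α) ≤ 2 * ((1 + δ ^ 2) * V))
    (hcost : D * S * (R ^ (-2 : ℝ) + l ^ (-2 : ℝ)) + V * R ^ (α - 1) + U * R ^ (β - 1) <
      c / 2 * l ^ (α - 1)) :
    R ^ d * ((1 + D * (δ ^ 2 + (δ * (R / l)) ^ 2)) * S) + R ^ ((d + 1 : ℕ) + α) * W +
        R ^ ((d + 1 : ℕ) + β) * ((1 + δ ^ 2) * U) <
      R ^ d * S + R ^ ((d + 1 : ℕ) + α) * V + R ^ ((d + 1 : ℕ) + β) * U := by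
  have hfactor (y : ℝ) : R ^ ((d + 1 : ℕ) + y) = R ^ (d + 2) * R ^ (y - 1) := by
    rw [← Real.rpow_natCast, ← Real.rpow_add hR]
    push_cast
    ring_nf
  have hfactor' : R ^ d = R ^ (d + 2) * R ^ (-2 : ℝ) := by
    rw [Real.rpow_neg hR.le, Real.rpow_two, pow_add]
    field_simp
  have hα : R ^ (α - 1) * (R / l) ^ (1 - α) = l ^ (α - 1) := by
    rw [← neg_sub α 1, Real.div_rpow hR.le hl.le, Real.rpow_neg hR.le, Real.rpow_neg hl.le]
    field_simp
  have hl2 : R ^ (-2 : ℝ) * (R / l) ^ 2 = l ^ (-2 : ℝ) := by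
    rw [Real.rpow_neg hR.le, Real.rpow_neg hl.le, Real.rpow_two, Real.rpow_two]
    field_simp
  have hgain : R ^ (α - 1) * W ≤
      R ^ (α - 1) * ((1 + δ ^ 2) * V) - c / 2 * δ ^ 2 * l ^ (α - 1) := by
    rw [← hα]
    linarith [mul_le_mul_of_nonneg_left hW (Real.rpow_nonneg hR.le (α - 1))]
  have hloss := mul_lt_mul_of_pos_left hcost (pow_pos hδ 2)
  rw [← hl2] at hloss
  rw [hfactor', hfactor, hfactor]
  simp only [mul_assoc, ← mul_add]
  refine mul_lt_mul_of_pos_left ?_ (by positivity)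
  linarith

theorem ofReal_rescaled_energy_add_lt {d : ℕ} {S V U W : ℝ≥0∞} {l R δ : ℝ} (hS : S ≠ ⊤)
    (hV : V ≠ ⊤) (hU : U ≠ ⊤) (hc : 0 ≤ c) (hD : 0 ≤ D) (hl : 0 < l) (hR : 0 < R) (hδ : 0 < δ)
    (hW : 2 * W + ENNReal.ofReal (c * δ ^ 2 * (R / l) ^ (1 - α)) ≤
      2 * (ENNReal.ofReal (1 + δ ^ 2) * V))
    (hcost : D * S.toReal * (R ^ (-2 : ℝ) + l ^ (-2 : ℝ)) + V.toReal * R ^ (α - 1) +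
      U.toReal * R ^ (β - 1) < c / 2 * l ^ (α - 1)) :
    ENNReal.ofReal (R ^ d) *
          (ENNReal.ofReal (1 + D * (δ ^ 2 + (δ * (R / l)) ^ 2)) * S) +
        ENNReal.ofReal (R ^ ((d + 1 : ℕ) + α)) * W +
        ENNReal.ofReal (R ^ ((d + 1 : ℕ) + β)) * (ENNReal.ofReal (1 + δ ^ 2) * U) <
      ENNReal.ofReal (R ^ d) * S + ENNReal.ofReal (R ^ ((d + 1 : ℕ) + α)) * V +
        ENNReal.ofReal (R ^ ((d + 1 : ℕ) + β)) * U := by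
  have hW' : W ≠ ⊤ := by
    rintro rfl
    rw [ENNReal.mul_top two_ne_zero, top_add, top_le_iff] at hW
    exact (by finiteness : 2 * (ENNReal.ofReal (1 + δ ^ 2) * V) ≠ ⊤) hW
  lift S to NNReal using hS
  lift V to NNReal using hV
  lift U to NNReal using hU
  lift W to NNReal using hW'
  rw [← ENNReal.toReal_le_toReal (by finiteness) (by finiteness)] at hW
  rw [← ENNReal.toReal_lt_toReal (by finiteness) (by finiteness)]
  have : 0 ≤ 1 + D * (δ ^ 2 + (δ * (R / l)) ^ 2) := by positivity
  simp (disch := first | positivity | finiteness) only [ENNReal.toReal_add, ENNReal.toReal_mul,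
    ENNReal.toReal_ofReal, ENNReal.toReal_ofNat] at hW ⊢
  exact rescaled_energy_add_lt hl hR hδ hW hcost

end Parameters

section Competitor

theorem exists_pos_le_half_mul_le_one_ofReal_mul_lt (k : ℝ) {M : ℝ≥0∞} (hM : M ≠ ⊤) {ε : ℝ}
    (hε : 0 < ε) :
    ∃ δ : ℝ, 0 < δ ∧ δ ≤ 1 / 2 ∧ δ * k ≤ 1 ∧ ENNReal.ofReal (2 * δ) * M < ENNReal.ofReal ε := by
  have hmul (c : ℝ) : Tendsto (fun δ : ℝ ↦ δ * c) (𝓝[>] 0) (𝓝 0) := by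
    simpa using ((continuous_mul_const c).tendsto 0).mono_left nhdsWithin_le_nhds
  have hvol : Tendsto (fun δ : ℝ ↦ ENNReal.ofReal (δ * 2) * M) (𝓝[>] 0) (𝓝 0) := by
    simpa using ENNReal.Tendsto.mul_const (ENNReal.tendsto_ofReal (hmul 2)) (Or.inr hM)
  obtain ⟨δ, hδ0, hδ2, hδk, hδM⟩ := (eventually_mem_nhdsWithin.and
    (((hmul 2).eventually_le_const one_pos).and (((hmul k).eventually_le_const one_pos).and
      (hvol.eventually_lt_const (ENNReal.ofReal_pos.2 hε))))).exists
  exact ⟨δ, hδ0, by linarith, hδk, by rwa [mul_comm 2 δ]⟩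

theorem exists_totalEnergy_lt_totalEnergy_ball {d : ℕ} (hd : 1 ≤ d) {α β A : ℝ} (hα0 : 0 < α)
    (hα1 : α < 1) (hβd : -((d + 1 : ℕ) : ℝ) < β) (hβ1 : β < 1) (hA : 0 ≤ A) :
    ∃ R₀ : ℝ, 1 ≤ R₀ ∧ ∀ R, R₀ ≤ R → ∀ ε : ℝ, 0 < ε →
      ∃ F : Set (EuclideanSpace ℝ (Fin (d + 1))), MeasurableSet F ∧
        volume F = volume (ball (0 : EuclideanSpace ℝ (Fin (d + 1))) R) ∧
        volume (symmDiff (ball 0 R) F) < ENNReal.ofReal ε ∧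
        totalEnergy α β A F <
          totalEnergy α β A (ball (0 : EuclideanSpace ℝ (Fin (d + 1))) R) := by
  obtain ⟨e, he⟩ := exists_norm_eq (EuclideanSpace ℝ (Fin (d + 1))) zero_le_one
  have hfin := finrank_euclideanSpace_fin (𝕜 := ℝ) (n := d + 1)
  have hd1 : (1 : ℝ) ≤ (d + 1 : ℕ) := by exact_mod_cast Nat.le_add_left 1 d
  obtain ⟨c, hc, hriesz⟩ := exists_two_mul_powerEnergy_starBody_sineProfile_add_le volume
    (by rw [hfin]; omega) he (p := α - (d + 1 : ℕ)) (by rw [hfin]; linarith) (by linarith)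
  obtain ⟨l, hl, R₀, hR₀, hcost⟩ := exists_forall_ge_perturbation_cost_lt
    (D := (d * 3 ^ d + 1) * (μH[d] (sphere (0 : EuclideanSpace ℝ (Fin (d + 1))) 1)).toReal)
    (V := (rieszEnergy α (ball (0 : EuclideanSpace ℝ (Fin (d + 1))) 1)).toReal)
    (U := (potEnergy β A (ball (0 : EuclideanSpace ℝ (Fin (d + 1))) 1)).toReal)
    (by linarith) hα1 hβ1 (half_pos hc)
  refine ⟨R₀, hR₀, fun R hR ε hε ↦ ?_⟩
  obtain ⟨hlR, hcost⟩ := hcost R hR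
  have hR0 : 0 < R := by linarith
  have hk : 16 ≤ R / l := (le_div_iff₀ hl).2 hlR
  obtain ⟨δ, hδ, hδ2, hδk, hδε⟩ := exists_pos_le_half_mul_le_one_ofReal_mul_lt (R / l)
    (measure_ball_lt_top (μ := volume) (x := (0 : EuclideanSpace ℝ (Fin (d + 1)))) (r := R)).ne hε
  have hg := isOddProfile_sineProfile he hδ.le hδ2 (by linarith) hδk
  have hW := hriesz hδ hδ2 hk hδk
  rw [hfin, show (1 : ℝ) - (d + 1 : ℕ) - (α - (d + 1 : ℕ)) = 1 - α by ring] at hW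
  refine ⟨R • starBody (radialFun (sineProfile e δ (R / l))),
    (measurableSet_starBody hg.continuous_radialFun.measurable).const_smul₀ R,
    hg.measure_smul_starBody volume hR0,
    (hg.measure_symmDiff_smul_starBody_le volume hR0).trans_lt hδε,
    (hg.totalEnergy_smul_starBody_le hδ hβd.le (hβ1.le.trans hd1) hA hR0).trans_lt <|
      (ofReal_rescaled_energy_add_lt (hausdorffMeasure_sphere_lt_top hfin).ne
        (powerEnergy_ball_lt_top volume (by rw [hfin]; linarith) 1).ne
        (potEnergy_ball_lt_top hβd hA).ne hc.le (by positivity) hl hR0 hδ hW hcost).trans_le <|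
      le_totalEnergy_ball hA hR0⟩

end Competitor

theorem statement7_general {n : ℕ} (hn : 2 ≤ n) {α β A : ℝ} (hα0 : 0 < α) (hα1 : α < 1)
    (hβn : -(n : ℝ) < β) (hβ1 : β < 1) (hA : 0 ≤ A) :
    ∃ mstar : ℝ, 0 < mstar ∧
      ∀ m, mstar < m → ¬ IsL1LocalMin α β A m (ballOfVolume n m) := by
  obtain ⟨d, rfl⟩ : ∃ d, n = d + 1 := Nat.exists_eq_add_one.2 (by omega)
  obtain ⟨R₀, hR₀, hcompetitor⟩ :=
    exists_totalEnergy_lt_totalEnergy_ball (by omega) hα0 hα1 hβn hβ1 hA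
  have hball : 0 < (volume (unitBall (d + 1))).toReal :=
    ENNReal.toReal_pos (measure_ball_pos volume 0 one_pos).ne' measure_ball_lt_top.ne
  refine ⟨(volume (unitBall (d + 1))).toReal * R₀ ^ (d + 1), by positivity, fun m hm ↦ ?_⟩
  rintro ⟨-, hvol, ε, hε, hmin⟩
  have hR : R₀ ≤ (m / (volume (unitBall (d + 1))).toReal) ^ (1 / ((d + 1 : ℕ) : ℝ)) := by
    have hm0 : 0 < m := lt_trans (by positivity) hm
    rw [one_div, Real.le_rpow_inv_iff_of_pos (by linarith) (by positivity) (by positivity),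
      Real.rpow_natCast, le_div_iff₀' hball]
    exact hm.le
  obtain ⟨F, hF, hFvol, hFsymm, hlt⟩ := hcompetitor _ hR ε hε
  exact (hmin F hF (hFvol.trans hvol) hFsymm).not_gt hlt

end

/-- If `α < β` and `β < 1`, then for all sufficiently large masses the ball is not an
`L¹`-local minimizer. -/
theorem statement7 (n : ℕ) (hn : 2 ≤ n) (α β A : ℝ)
    (hα0 : 0 < α) (hαn : α < n) (hβ : 0 < β) (hA : 0 < A) (hαβ : α < β) (hβ1 : β < 1) :
    ∃ mstar : ℝ, 0 < mstar ∧
      ∀ m, mstar < m → ¬ IsL1LocalMin α β A m (ballOfVolume n m) :=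
  statement7_general hn hα0 (hαβ.trans hβ1) ((neg_nonpos.2 n.cast_nonneg).trans_lt hβ) hβ1 hA.le
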